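/- Let p_n denote the n-th prime. Then (log n)/(p_n · p_{n+1}) · Σ_{m ≤ n} p_m = 1/2 − (log log n)/(2 log n) + 1/(4 log n) + o(1/log n) as n → ∞. -/

import Mathlib

/-! The statement is a second-order consequence of the prime number theorem with error term
`θ(x) = x + O(x / log² x)`. That estimate is derived here from the behaviour of
the Riemann zeta function near the line `re s = 1`.

*Analytic input.* Euler–Maclaurin summation bounds `ζ` by an arbitrarily small power of `|im s|` close to
that line (`PNT.zeta_growth`). Together with the inequality of Mertens between `ζ(σ)`, `ζ(σ + i t)` and
`ζ(σ + 2 i t)` this gives a lower bound for `|ζ|` in a region extending slightly to the left of the line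
(`PNT.zeta_lower`). Hence the function `G = -(deriv ζ / ζ) - ζ`, which is the Dirichlet series with
coefficients `Λ(n) - 1` and has no pole at `1`, has a fourth derivative that is `O((1 + |im s|) ^ (1/2))`
uniformly for `1 ≤ re s ≤ 3/2` (`PNT.G_deriv_bound`). The kernel `1 / (s (s + 1))` of the weight
`max (1 - n / N) 0` makes the Mellin inversion integral converge absolutely, and letting `re s → 1` gives
`∑_{n < N} (Λ(n) - 1) log⁴ n · (N - n) = O(N²)` (`PNT.smooth_bound`).

*Removing the smoothing.* The weights `(Λ(n) - 1) log⁴ n` are at least `-log⁴ n`, so smoothed sums at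
distance `N / log² N` control the sharp sum up to `O(N log² N)` (`PNT.E_bound`). Partial summation removes
the factor `log⁴ n`, and discarding prime powers gives the estimate for `θ` (`PNT.lp_bound`). A further
partial summation gives `∑_{q < N, q prime} q = N² / (2 log N) + N² / (4 log² N) + O(N² / log³ N)`
(`PNT.primeSum_asymp`).

*Passage to the `n`-th prime.* At `N = p n` and `N = p (n + 1)` the sum of the primes below `N` is `S n` up
to one negligible term, while `n log N / N → 1`. Rewriting the expansion in terms of `log n`
(`PNT.change_variable`) shows that `log² n · S n / N² - log n / 2 + log (log n) / 2 → 1 / 4` for both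
choices of `N` (`PNT.upper_limit`, `PNT.lower_limit`). Since `p n * p (n + 1)` lies between the two
squares, the same limit holds with `N²` replaced by this product; dividing by `log n` is the theorem. -/

open Filter Finset Asymptotics

/-- `p n` is the n-th prime, `p 1 = 2`. -/
noncomputable def p (n : ℕ) : ℕ := Nat.nth Nat.Prime (n - 1)

/-- Sum of the first `n` primes. -/
noncomputable def S (n : ℕ) : ℕ := ∑ m ∈ Finset.Icc 1 n, p m

namespace PNT

open Topology

/-! ### Growth of zeta near the line of real part one -/

/-- The `n`-th block `-s (s - 1) ∫ x in n..n+1, (x - n) x ^ (-s - 1)` of the Euler–Maclaurin remainder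
of `(s - 1) ζ(s)`, in evaluated form, which is visibly entire in `s` when `n ≥ 1`. -/
noncomputable def zetaTail (n : ℕ) (s : ℂ) : ℂ :=
  (s - 1) * ((n : ℂ) + 1) ^ (-s) + (((n : ℂ) + 1) ^ (1 - s) - (n : ℂ) ^ (1 - s))

lemma zetaTail_eq_integral {n : ℕ} (hn : 1 ≤ n) (s : ℂ) :
    zetaTail n s = -(s * (s - 1)) *
      ∫ x in (n : ℝ)..(n + 1 : ℝ), ((x : ℂ) - n) * (x : ℂ) ^ (-s - 1) := by
  have hn' : (0 : ℝ) < n := by exact_mod_cast hn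
  have hd : ∀ x ∈ Set.uIcc (n : ℝ) (n + 1),
      HasDerivAt (fun x : ℝ => (s - 1) * (((x : ℂ) - n) * (x : ℂ) ^ (-s)) + (x : ℂ) ^ (1 - s))
        (-(s * (s - 1)) * (((x : ℂ) - n) * (x : ℂ) ^ (-s - 1))) x := by
    intro x hx
    rw [Set.uIcc_of_le (by linarith)] at hx
    have hx0 : 0 < x := by linarith [hx.1]
    have hsl : (x : ℂ) ∈ Complex.slitPlane := by simp [Complex.slitPlane, hx0]
    have h1 := ((hasDerivAt_id (x : ℂ)).cpow_const (c := -s) hsl).comp_ofReal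
    have h2 := ((hasDerivAt_id (x : ℂ)).cpow_const (c := 1 - s) hsl).comp_ofReal
    have h3 := ((hasDerivAt_id (x : ℂ)).sub_const (n : ℂ)).comp_ofReal
    have := ((h3.mul h1).const_mul (s - 1)).add h2
    refine this.congr_deriv ?_
    simp only [id]
    rw [show 1 - s - 1 = -s by ring]
    ring
  have hc : ContinuousOn (fun x : ℝ => -(s * (s - 1)) * (((x : ℂ) - n) * (x : ℂ) ^ (-s - 1)))
      (Set.uIcc (n : ℝ) (n + 1)) := by
    intro x hx
    rw [Set.uIcc_of_le (by linarith)] at hx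
    have hx0 : 0 < x := by linarith [hx.1]
    have hsl : (x : ℂ) ∈ Complex.slitPlane := by simp [Complex.slitPlane, hx0]
    apply ContinuousAt.continuousWithinAt
    have : ContinuousAt (fun x : ℝ => (x : ℂ) ^ (-s - 1)) x :=
      (continuousAt_cpow_const hsl).comp (f := fun x : ℝ => (x : ℂ)) Complex.continuous_ofReal.continuousAt
    fun_prop
  have := intervalIntegral.integral_eq_sub_of_hasDerivAt hd hc.intervalIntegrable
  rw [intervalIntegral.integral_const_mul] at this
  rw [this, zetaTail]
  push_cast
  ring

lemma norm_zetaTail_le_integral {n : ℕ} (hn : 1 ≤ n) (s : ℂ) :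
    ‖zetaTail n s‖ ≤ ‖s‖ * ‖s - 1‖ * ∫ x in (n : ℝ)..(n + 1 : ℝ), x ^ (-s.re - 1) := by
  have hn' : (0 : ℝ) < n := by exact_mod_cast hn
  rw [zetaTail_eq_integral hn, norm_mul, norm_neg, norm_mul]
  gcongr
  apply intervalIntegral.norm_integral_le_of_norm_le (by linarith)
  · refine MeasureTheory.ae_of_all _ fun x hx => ?_
    have hx0 : 0 < x := by linarith [hx.1]
    rw [norm_mul, Complex.norm_cpow_eq_rpow_re_of_pos hx0]
    have : ‖(x : ℂ) - n‖ ≤ 1 := by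
      rw [← Complex.ofReal_natCast, ← Complex.ofReal_sub, Complex.norm_real, Real.norm_eq_abs, abs_le]
      constructor <;> linarith [hx.1, hx.2]
    simpa using mul_le_mul_of_nonneg_right this (Real.rpow_nonneg hx0.le _)
  · apply intervalIntegral.intervalIntegrable_rpow
    right
    rw [Set.uIcc_of_le (by linarith)]
    intro h
    linarith [h.1]

/-- A bound that telescopes over `n`, so that the whole remainder is estimated without loss. -/
lemma norm_zetaTail_le {n : ℕ} (hn : 1 ≤ n) {s : ℂ} (hs : 0 < s.re) :
    ‖zetaTail n s‖ ≤ ‖s‖ * ‖s - 1‖ / s.re * ((n : ℝ) ^ (-s.re) - ((n + 1 : ℕ) : ℝ) ^ (-s.re)) := by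
  have hn' : (0 : ℝ) < n := by exact_mod_cast hn
  refine (norm_zetaTail_le_integral hn s).trans_eq ?_
  rw [integral_rpow]
  · rw [show -s.re - 1 + 1 = -s.re by ring]
    push_cast
    field_simp
    ring
  · right
    refine ⟨by linarith, ?_⟩
    rw [Set.uIcc_of_le (by linarith)]
    intro h
    linarith [h.1]

/-- A summable bound, locally uniform in `s`, used to prove convergence and holomorphy. -/
lemma norm_zetaTail_le' {n : ℕ} (hn : 1 ≤ n) {s : ℂ} (hs : 0 < s.re) :
    ‖zetaTail n s‖ ≤ ‖s‖ * ‖s - 1‖ * (n : ℝ) ^ (-s.re - 1) := by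
  have hn' : (0 : ℝ) < n := by exact_mod_cast hn
  refine (norm_zetaTail_le_integral hn s).trans ?_
  gcongr
  have : ∀ x ∈ Set.Icc (n : ℝ) (n + 1), x ^ (-s.re - 1) ≤ (n : ℝ) ^ (-s.re - 1) := fun x hx =>
    Real.rpow_le_rpow_of_nonpos hn' hx.1 (by linarith)
  refine (intervalIntegral.integral_mono_on (g := fun _ => (n : ℝ) ^ (-s.re - 1)) (by linarith) ?_ (by simp) this).trans_eq (by simp)
  apply intervalIntegral.intervalIntegrable_rpow
  right
  rw [Set.uIcc_of_le (by linarith)]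
  intro h
  linarith [h.1]

lemma sum_zetaTail (N M : ℕ) (s : ℂ) :
    ∑ m ∈ range M, zetaTail (N + m) s =
      (s - 1) * (∑ n ∈ range (N + M), ((n : ℂ) + 1) ^ (-s) - ∑ n ∈ range N, ((n : ℂ) + 1) ^ (-s))
        + (((N + M : ℕ) : ℂ) ^ (1 - s) - (N : ℂ) ^ (1 - s)) := by
  induction M with
  | zero => simp
  | succ M ih =>
    rw [sum_range_succ, ih, ← add_assoc, sum_range_succ, zetaTail]
    push_cast
    ring

lemma summable_zetaTail_bound (N : ℕ) {a : ℝ} (ha : 0 < a) :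
    Summable fun m : ℕ => (((N + m : ℕ) : ℝ)) ^ (-a - 1) := by
  have h : Summable fun m : ℕ => (m : ℝ) ^ (-a - 1) := Real.summable_nat_rpow.2 (by linarith)
  have := (summable_nat_add_iff N).2 h
  simpa [add_comm] using this

lemma zetaTail_differentiable {n : ℕ} (hn : 1 ≤ n) : Differentiable ℂ (zetaTail n) := by
  have h1 : (n : ℂ) ≠ 0 := by exact_mod_cast (by omega : n ≠ 0)
  have h2 : (n : ℂ) + 1 ≠ 0 := by exact_mod_cast (by omega : n + 1 ≠ 0)
  intro s
  unfold zetaTail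
  have e1 : DifferentiableAt ℂ (fun s : ℂ => ((n : ℂ) + 1) ^ (-s)) s :=
    (differentiableAt_id.neg).const_cpow (Or.inl h2)
  have e2 : DifferentiableAt ℂ (fun s : ℂ => ((n : ℂ) + 1) ^ (1 - s)) s :=
    (differentiableAt_id.const_sub 1).const_cpow (Or.inl h2)
  have e3 : DifferentiableAt ℂ (fun s : ℂ => (n : ℂ) ^ (1 - s)) s :=
    (differentiableAt_id.const_sub 1).const_cpow (Or.inl h1)
  fun_prop

lemma differentiableOn_tsum_zetaTail {N : ℕ} (hN : 1 ≤ N) :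
    DifferentiableOn ℂ (fun s => ∑' m : ℕ, zetaTail (N + m) s) {s | 0 < s.re} := by
  intro s hs
  have hs : 0 < s.re := hs
  set U : Set ℂ := {z | s.re / 2 < z.re} ∩ Metric.ball 0 (‖s‖ + 1)
  have hU : IsOpen U := (isOpen_lt continuous_const Complex.continuous_re).inter Metric.isOpen_ball
  have hsU : s ∈ U := ⟨by simp only [Set.mem_ofPred_eq]; linarith, by simp⟩
  have : DifferentiableOn ℂ (fun s => ∑' m : ℕ, zetaTail (N + m) s) U := by
    refine Complex.differentiableOn_tsum_of_summable_norm
      (u := fun m : ℕ => (‖s‖ + 1) * (‖s‖ + 2) * (((N + m : ℕ) : ℝ)) ^ (-(s.re / 2) - 1))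
      ((summable_zetaTail_bound N (by positivity)).mul_left _)
      (fun m => (zetaTail_differentiable (by omega)).differentiableOn) hU ?_
    rintro m z ⟨hz1, hz2⟩
    have hz1 : s.re / 2 < z.re := hz1
    have hz2 : ‖z‖ < ‖s‖ + 1 := by simpa using hz2
    refine (norm_zetaTail_le' (by omega) (by linarith)).trans ?_
    have h3 : ‖z - 1‖ ≤ ‖s‖ + 2 := (norm_sub_le _ _).trans (by simp; linarith)
    have h4 : (1 : ℝ) ≤ ((N + m : ℕ) : ℝ) := by exact_mod_cast (by omega)
    gcongr
  exact ((this s hsU).differentiableAt (hU.mem_nhds hsU)).differentiableWithinAt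

/-- The Euler–Maclaurin formula for `(s - 1) ζ(s)` where the Dirichlet series converges. -/
lemma zeta_one_formula_of_one_lt {N : ℕ} (hN : 1 ≤ N) {s : ℂ} (hs : 1 < s.re) :
    riemannZeta₁ s = (s - 1) * (∑ n ∈ range N, ((n : ℂ) + 1) ^ (-s)) + (N : ℂ) ^ (1 - s)
      + ∑' m : ℕ, zetaTail (N + m) s := by
  have hs1 : s ≠ 1 := by rintro rfl; simp at hs
  have hsum : Summable fun m : ℕ => zetaTail (N + m) s :=
    Summable.of_norm_bounded ((summable_zetaTail_bound N (by linarith : 0 < s.re)).mul_left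
      (‖s‖ * ‖s - 1‖)) fun m => norm_zetaTail_le' (by omega) (by linarith)
  have h1 := hsum.hasSum.tendsto_sum_nat
  have hz : HasSum (fun n : ℕ => ((n : ℂ) + 1) ^ (-s)) (riemannZeta s) := by
    rw [zeta_eq_tsum_one_div_nat_add_one_cpow hs]
    have : Summable fun n : ℕ => 1 / ((n : ℂ) + 1) ^ s := by
      have := (summable_nat_add_iff 1).2 (Complex.summable_one_div_nat_cpow.2 hs)
      simpa using this
    simpa [Complex.cpow_neg] using this.hasSum
  have h2 : Tendsto (fun M => ∑ m ∈ range M, zetaTail (N + m) s) atTop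
      (nhds ((s - 1) * (riemannZeta s - ∑ n ∈ range N, ((n : ℂ) + 1) ^ (-s))
        + (0 - (N : ℂ) ^ (1 - s)))) := by
    simp_rw [sum_zetaTail]
    refine ((((hz.tendsto_sum_nat.comp (tendsto_add_atTop_nat N)).congr (fun M => by
      simp [add_comm])).sub_const _).const_mul _).add (Tendsto.sub_const ?_ _)
    rw [tendsto_zero_iff_norm_tendsto_zero]
    have : Tendsto (fun M : ℕ => ((M : ℝ)) ^ (-(s.re - 1))) atTop (nhds 0) :=
      (tendsto_rpow_neg_atTop (by linarith)).comp tendsto_natCast_atTop_atTop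
    refine (this.comp (tendsto_add_atTop_nat N)).congr fun M => ?_
    have : (0 : ℝ) < ((N + M : ℕ) : ℝ) := by exact_mod_cast (by omega)
    rw [← Complex.ofReal_natCast, Complex.norm_cpow_eq_rpow_re_of_pos this]
    simp [add_comm]
  have h3 := tendsto_nhds_unique h1 h2
  rw [h3]
  have := riemannZeta_eq_inv_sub_mul hs1
  have h4 : riemannZeta₁ s = (s - 1) * riemannZeta s := by
    rw [this]; field_simp [sub_ne_zero.2 hs1]
  rw [h4]; ring

/-- The Euler–Maclaurin formula for `(s - 1) ζ(s)`, extended to `0 < re s` by analytic continuation. -/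
lemma zeta_one_formula {N : ℕ} (hN : 1 ≤ N) {s : ℂ} (hs : 0 < s.re) :
    riemannZeta₁ s = (s - 1) * (∑ n ∈ range N, ((n : ℂ) + 1) ^ (-s)) + (N : ℂ) ^ (1 - s)
      + ∑' m : ℕ, zetaTail (N + m) s := by
  have hU : IsOpen {s : ℂ | 0 < s.re} := isOpen_lt continuous_const Complex.continuous_re
  have hN0 : (N : ℂ) ≠ 0 := by exact_mod_cast (by omega : N ≠ 0)
  have hd : DifferentiableOn ℂ (fun s : ℂ => (s - 1) * (∑ n ∈ range N, ((n : ℂ) + 1) ^ (-s))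
      + (N : ℂ) ^ (1 - s) + ∑' m : ℕ, zetaTail (N + m) s) {s | 0 < s.re} := by
    refine DifferentiableOn.add ?_ (differentiableOn_tsum_zetaTail hN)
    apply Differentiable.differentiableOn
    have e1 : ∀ n : ℕ, Differentiable ℂ (fun s : ℂ => ((n : ℂ) + 1) ^ (-s)) := fun n s =>
      (differentiableAt_id.neg).const_cpow (Or.inl (by exact_mod_cast (by omega : n + 1 ≠ 0)))
    have e2 : Differentiable ℂ (fun s : ℂ => (N : ℂ) ^ (1 - s)) := fun s =>
      (differentiableAt_id.const_sub 1).const_cpow (Or.inl hN0)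
    fun_prop
  have := AnalyticOnNhd.eqOn_of_preconnected_of_eventuallyEq
    (differentiable_riemannZeta₁.differentiableOn.analyticOnNhd hU) (hd.analyticOnNhd hU)
    (convex_halfSpace_re_gt 0).isPreconnected (z₀ := 2) (by simp) ?_
  · exact this hs
  · filter_upwards [(isOpen_lt continuous_const Complex.continuous_re).mem_nhds
      (show (2 : ℂ) ∈ {s : ℂ | 1 < s.re} by simp)] with z hz
    exact zeta_one_formula_of_one_lt hN hz

lemma norm_tsum_zetaTail_le {N : ℕ} (hN : 1 ≤ N) {s : ℂ} (hs : 0 < s.re) :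
    ‖∑' m : ℕ, zetaTail (N + m) s‖ ≤ ‖s‖ * ‖s - 1‖ / s.re * (N : ℝ) ^ (-s.re) := by
  have hpos : 0 ≤ ‖s‖ * ‖s - 1‖ / s.re := by positivity
  have hsum : Summable fun m : ℕ => zetaTail (N + m) s :=
    Summable.of_norm_bounded ((summable_zetaTail_bound N hs).mul_left
      (‖s‖ * ‖s - 1‖)) fun m => norm_zetaTail_le' (by omega) hs
  refine le_of_tendsto hsum.hasSum.tendsto_sum_nat.norm (Eventually.of_forall fun M => ?_)
  have : ∀ M, ‖∑ m ∈ range M, zetaTail (N + m) s‖ ≤ ‖s‖ * ‖s - 1‖ / s.re *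
      ((N : ℝ) ^ (-s.re) - ((N + M : ℕ) : ℝ) ^ (-s.re)) := by
    intro M
    induction M with
    | zero => simp
    | succ M ih =>
      rw [sum_range_succ]
      have h2 := norm_zetaTail_le (n := N + M) (by omega) hs
      refine (norm_add_le _ _).trans ((add_le_add ih h2).trans_eq ?_)
      rw [← add_assoc]; ring
  refine (this M).trans (mul_le_mul_of_nonneg_left ?_ hpos)
  linarith [Real.rpow_nonneg (Nat.cast_nonneg (α := ℝ) (N + M)) (-s.re)]

/-- Comparison of the sum with `∫ x in 0..N, x ^ (d - 1)`. -/
lemma sum_rpow_le {d : ℝ} (hd : 0 < d) (hd1 : d ≤ 1) (N : ℕ) :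
    ∑ n ∈ range N, ((n : ℝ) + 1) ^ (d - 1) ≤ (N : ℝ) ^ d / d := by
  induction N with
  | zero => simp; positivity
  | succ N ih =>
    rw [sum_range_succ]
    have key : ((N : ℝ) + 1) ^ (d - 1) ≤ (((N : ℝ) + 1) ^ d - (N : ℝ) ^ d) / d := by
      rw [le_div_iff₀ hd]
      have h1 : (0 : ℝ) < (N : ℝ) + 1 := by positivity
      -- Bernoulli's inequality for `N / (N + 1) = 1 - 1 / (N + 1)`
      have h2 := rpow_one_add_le_one_add_mul_self (s := -1 / ((N : ℝ) + 1)) (p := d)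
        (by rw [le_div_iff₀ h1]; linarith [(Nat.cast_nonneg N : (0 : ℝ) ≤ N)]) hd.le hd1
      have h3 : 1 + -1 / ((N : ℝ) + 1) = N / (N + 1) := by field_simp; ring
      rw [h3, Real.div_rpow (by positivity) h1.le, div_le_iff₀ (by positivity)] at h2
      rw [Real.rpow_sub_one h1.ne']
      have : (1 + d * (-1 / ((N : ℝ) + 1))) * ((N : ℝ) + 1) ^ d =
        ((N : ℝ) + 1) ^ d - ((N : ℝ) + 1) ^ d / (N + 1) * d := by field_simp; ring
      linarith
    push_cast
    calc _ ≤ (N : ℝ) ^ d / d + (((N : ℝ) + 1) ^ d - (N : ℝ) ^ d) / d := add_le_add ih key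
      _ = _ := by ring

/-- Growth of `ζ` slightly to the left of the line `re s = 1`: the exponent of `|im s|` can be made as
small as desired. -/
lemma zeta_growth {d : ℝ} (hd : 0 < d) (hd1 : d ≤ 1 / 2) {s : ℂ} (ht : 1 ≤ |s.im|)
    (h1 : 1 - d ≤ s.re) (h3 : s.re ≤ 3) :
    ‖riemannZeta s‖ ≤ (1 / d + 17) * |s.im| ^ d := by
  have hs0 : 0 < s.re := by linarith
  have hs1 : s ≠ 1 := by rintro rfl; simp at ht; linarith
  -- Cutting the series at `N ≈ |im s|` balances the partial sum against the remainder.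
  set N := ⌊|s.im|⌋₊
  have hN : 1 ≤ N := Nat.one_le_floor_iff _ |>.2 ht
  have hN1 : (1 : ℝ) ≤ N := by exact_mod_cast hN
  have hNt : (N : ℝ) ≤ |s.im| := Nat.floor_le (by positivity)
  have htN : |s.im| < N + 1 := Nat.lt_floor_add_one _
  have hsub : |s.im| ≤ ‖s - 1‖ := by simpa using Complex.abs_im_le_norm (s - 1)
  have hsub0 : 0 < ‖s - 1‖ := by linarith
  have hz : riemannZeta s = ∑ n ∈ range N, ((n : ℂ) + 1) ^ (-s) + (N : ℂ) ^ (1 - s) / (s - 1)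
      + (∑' m : ℕ, zetaTail (N + m) s) / (s - 1) := by
    rw [riemannZeta_eq_inv_sub_mul hs1, zeta_one_formula hN hs0]
    field_simp [sub_ne_zero.2 hs1]
  have b1 : ‖∑ n ∈ range N, ((n : ℂ) + 1) ^ (-s)‖ ≤ (N : ℝ) ^ d / d := by
    refine (norm_sum_le _ _).trans ((sum_le_sum fun n _ => ?_).trans
      (sum_rpow_le hd (by linarith) N))
    have : (0 : ℝ) < (n : ℝ) + 1 := by positivity
    have e : ((n : ℂ) + 1) = (((n : ℝ) + 1 : ℝ) : ℂ) := by push_cast; rfl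
    rw [e, Complex.norm_cpow_eq_rpow_re_of_pos this]
    apply Real.rpow_le_rpow_of_exponent_le (by linarith [(Nat.cast_nonneg n : (0 : ℝ) ≤ n)])
    simp; linarith
  have hpow : (N : ℝ) ^ (1 - s.re) ≤ (N : ℝ) ^ d :=
    Real.rpow_le_rpow_of_exponent_le hN1 (by linarith)
  have b2 : ‖(N : ℂ) ^ (1 - s) / (s - 1)‖ ≤ (N : ℝ) ^ d := by
    rw [norm_div, ← Complex.ofReal_natCast, Complex.norm_cpow_eq_rpow_re_of_pos (by linarith)]
    refine (div_le_self (by positivity) (by linarith)).trans (by simpa using hpow)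
  have b3 : ‖(∑' m : ℕ, zetaTail (N + m) s) / (s - 1)‖ ≤ 16 * (N : ℝ) ^ d := by
    rw [norm_div, div_le_iff₀ hsub0]
    refine (norm_tsum_zetaTail_le hN hs0).trans ?_
    have hs : ‖s‖ ≤ 8 * N := by
      have := Complex.norm_le_abs_re_add_abs_im s
      rw [abs_of_pos hs0] at this
      linarith
    have e : (N : ℝ) ^ (-s.re) * N = (N : ℝ) ^ (1 - s.re) := by
      rw [sub_eq_neg_add, Real.rpow_add_one (by positivity)]
    have hdiv : ‖s‖ / s.re ≤ 16 * N := by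
      rw [div_le_iff₀ hs0]
      nlinarith
    calc ‖s‖ * ‖s - 1‖ / s.re * (N : ℝ) ^ (-s.re)
        = ‖s‖ / s.re * (N : ℝ) ^ (-s.re) * ‖s - 1‖ := by ring
      _ ≤ 16 * N * (N : ℝ) ^ (-s.re) * ‖s - 1‖ := by gcongr
      _ = 16 * (N : ℝ) ^ (1 - s.re) * ‖s - 1‖ := by rw [← e]; ring
      _ ≤ _ := by gcongr
  rw [hz]
  calc _ ≤ (N : ℝ) ^ d / d + (N : ℝ) ^ d + 16 * (N : ℝ) ^ d :=
        (norm_add_le _ _).trans (add_le_add ((norm_add_le _ _).trans (add_le_add b1 b2)) b3)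
    _ = (1 / d + 17) * (N : ℝ) ^ d := by ring
    _ ≤ _ := by gcongr

/-! ### Lower bound for zeta and bounds for its logarithmic derivative -/

/-- The height `|im s| ^ (1 / 50)`. It bounds `ζ`, up to a constant, for `49 / 50 ≤ re s ≤ 3` and
`1 ≤ |im s|`; the exponent is chosen so that the power `ht s ^ 25` occurring in `G_deriv_bound_high` is `|im s| ^ (1 / 2)`. -/
noncomputable def ht (s : ℂ) : ℝ := |s.im| ^ (1 / 50 : ℝ)

lemma one_le_ht {s : ℂ} (h : 1 ≤ |s.im|) : 1 ≤ ht s := Real.one_le_rpow h (by norm_num)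

lemma ht_le_two_mul {s z : ℂ} (h : |z.im| ≤ 2 * |s.im|) : ht z ≤ 2 * ht s := by
  unfold ht
  calc |z.im| ^ (1 / 50 : ℝ) ≤ (2 * |s.im|) ^ (1 / 50 : ℝ) := by gcongr
    _ = 2 ^ (1 / 50 : ℝ) * |s.im| ^ (1 / 50 : ℝ) := Real.mul_rpow (by norm_num) (abs_nonneg _)
    _ ≤ 2 * |s.im| ^ (1 / 50 : ℝ) := by
      gcongr
      exact Real.rpow_le_self_of_one_le (by norm_num) (by norm_num)

lemma zeta_growth' {s : ℂ} (ht1 : 1 ≤ |s.im|) (h1 : 1 - 1 / 50 ≤ s.re) (h3 : s.re ≤ 3) :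
    ‖riemannZeta s‖ ≤ 67 * ht s := by
  have := zeta_growth (d := 1 / 50) (by norm_num) (by norm_num) ht1 h1 h3
  norm_num at this ⊢
  exact this

lemma mem_sphere_bounds {s z : ℂ} {r : ℝ} (hz : ‖z - s‖ ≤ r) :
    |z.re - s.re| ≤ r ∧ |z.im| ≤ |s.im| + r ∧ |s.im| - r ≤ |z.im| := by
  have h1 := (Complex.abs_re_le_norm (z - s)).trans hz
  have h2 := (Complex.abs_im_le_norm (z - s)).trans hz
  simp only [Complex.sub_re, Complex.sub_im] at h1 h2
  refine ⟨h1, ?_, ?_⟩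
  · have := abs_sub_abs_le_abs_sub z.im s.im; linarith
  · have := abs_sub_abs_le_abs_sub s.im z.im; rw [abs_sub_comm] at this; linarith

lemma ne_one_of_im {s : ℂ} (h : 1 ≤ |s.im|) : s ≠ 1 := by
  rintro rfl; simp at h; linarith

/-- Cauchy's estimate on a circle of radius `1 / 100`. -/
lemma norm_deriv_zeta_le {s : ℂ} (ht1 : 2 ≤ |s.im|) (h1 : 1 - 1 / 100 ≤ s.re) (h2 : s.re ≤ 2) :
    ‖deriv riemannZeta s‖ ≤ 13400 * ht s := by
  have key : ∀ z ∈ Metric.closedBall s (1 / 100), 1 ≤ |z.im| ∧ ‖riemannZeta z‖ ≤ 134 * ht s := by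
    intro z hz
    obtain ⟨a, b, c⟩ := mem_sphere_bounds (by simpa [dist_eq_norm] using hz : ‖z - s‖ ≤ 1 / 100)
    rw [abs_le] at a
    have h1z : 1 ≤ |z.im| := by linarith
    refine ⟨h1z, (zeta_growth' h1z (by linarith) (by linarith)).trans ?_⟩
    linarith [ht_le_two_mul (s := s) (z := z) (by linarith)]
  have := Complex.norm_deriv_le_of_forall_mem_sphere_norm_le (f := riemannZeta) (c := s)
    (R := 1 / 100) (C := 134 * ht s) (by norm_num) ?_
    (fun z hz => (key z (Metric.sphere_subset_closedBall hz)).2)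
  · linarith
  · apply DifferentiableOn.diffContOnCl
    rw [closure_ball _ (by norm_num)]
    exact fun z hz => (differentiableAt_riemannZeta (ne_one_of_im (key z hz).1)).differentiableWithinAt

/-- The simple pole of `ζ` at `1`, seen from the right. -/
lemma zeta_near_one : ∃ C : ℝ, 0 < C ∧ ∀ x : ℝ, 0 < x → x ≤ 1 → ‖riemannZeta (1 + x)‖ ≤ C / x := by
  have hcont : ContinuousOn (fun x : ℝ => ‖riemannZeta₁ (1 + x)‖) (Set.Icc 0 1) := by
    have := differentiable_riemannZeta₁.continuous
    fun_prop
  obtain ⟨C, hC⟩ := isCompact_Icc.exists_bound_of_continuousOn hcont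
  refine ⟨max C 1, by positivity, fun x hx hx1 => ?_⟩
  have : (1 + x : ℂ) ≠ 1 := by simpa using hx.ne'
  rw [riemannZeta_eq_inv_sub_mul this, norm_mul]
  have := hC x ⟨hx.le, hx1⟩
  simp only [norm_norm] at this
  have e : ‖(1 + (x : ℂ) - 1)⁻¹‖ = x⁻¹ := by simp [abs_of_pos hx]
  rw [e, div_eq_mul_inv, mul_comm]
  gcongr
  exact this.trans (le_max_left _ _)

/-- The inequality of Mertens coming from `3 + 4 cos φ + cos (2 φ) ≥ 0`. -/
lemma three_four_one {x : ℝ} (hx : 0 < x) (y : ℝ) :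
    1 ≤ ‖riemannZeta (1 + x)‖ ^ 3 * ‖riemannZeta (1 + x + Complex.I * y)‖ ^ 4 *
      ‖riemannZeta (1 + x + 2 * Complex.I * y)‖ := by
  have := DirichletCharacter.norm_LFunction_product_ge_one (N := 1) 1 hx y
  simpa [DirichletCharacter.LFunctionTrivChar] using this

lemma zeta_pow_four_lower : ∃ c : ℝ, 0 < c ∧ ∀ s : ℂ, 2 ≤ |s.im| → 1 < s.re → s.re ≤ 2 →
    c * (s.re - 1) ^ 3 / ht s ≤ ‖riemannZeta s‖ ^ 4 := by
  obtain ⟨C, hC, hb⟩ := zeta_near_one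
  refine ⟨1 / (134 * C ^ 3), by positivity, fun s ht1 h1 h2 => ?_⟩
  set x := s.re - 1 with hx
  have hx0 : 0 < x := by linarith
  have h341 := three_four_one hx0 s.im
  have e1 : (1 + x + Complex.I * s.im : ℂ) = s := by
    apply Complex.ext <;> simp [hx]
  set w : ℂ := 1 + x + 2 * Complex.I * s.im with hw
  have hwre : w.re = s.re := by simp [hw, hx]
  have hwim : w.im = 2 * s.im := by simp [hw]
  have habs : |w.im| = 2 * |s.im| := by rw [hwim, abs_mul]; norm_num
  have b2 : ‖riemannZeta w‖ ≤ 134 * ht s := by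
    have := zeta_growth' (s := w) (by linarith) (by linarith) (by linarith)
    linarith [ht_le_two_mul (s := s) (z := w) habs.le]
  rw [e1] at h341
  have hB : 0 < ht s := by linarith [one_le_ht (s := s) (by linarith)]
  have b1 := hb x hx0 (by linarith)
  have : 1 ≤ (C / x) ^ 3 * ‖riemannZeta s‖ ^ 4 * (134 * ht s) := by
    refine h341.trans ?_
    gcongr
  rw [div_le_iff₀ hB]
  have e2 : (C / x) ^ 3 * ‖riemannZeta s‖ ^ 4 * (134 * ht s) =
    (‖riemannZeta s‖ ^ 4 * ht s) / (1 / (134 * C ^ 3) * x ^ 3) := by field_simp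
  rw [e2, le_div_iff₀ (by positivity)] at this
  linarith

/-- A lower bound for `ζ` in a region reaching to the left of `re s = 1` by a negative power of the
height. Right of `1 + η / ht s ^ 5` it follows from `zeta_pow_four_lower`; it is carried further left by
the mean value inequality and the bound for the derivative of `ζ`. -/
lemma zeta_lower : ∃ η c : ℝ, 0 < η ∧ η ≤ 1 / 100 ∧ 0 < c ∧ ∀ s : ℂ, 2 ≤ |s.im| →
    1 - η / ht s ^ 5 ≤ s.re → s.re ≤ 2 → c / ht s ^ 4 ≤ ‖riemannZeta s‖ := by
  obtain ⟨c₀, hc₀, hlow⟩ := zeta_pow_four_lower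
  set M : ℝ := 13400
  -- With this `η`, the variation of `ζ` over a segment of length `2 η / ht s ^ 5` is at most half of
  -- its lower bound at the right end of the segment.
  set η : ℝ := min (1 / 100) (c₀ / (256 * M ^ 4)) with hη
  have hη0 : 0 < η := by rw [hη]; positivity
  have hη1 : η ≤ 1 / 100 := min_le_left _ _
  have hη2 : 256 * M ^ 4 * η ≤ c₀ := by
    have : η ≤ c₀ / (256 * M ^ 4) := min_le_right _ _
    rw [le_div_iff₀ (by positivity)] at this
    linarith
  refine ⟨η, 2 * M * η, hη0, hη1, by positivity, fun s ht1 h1 h2 => ?_⟩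
  set B := ht s with hB
  have hB1 : 1 ≤ B := one_le_ht (by linarith)
  set x := η / B ^ 5 with hx
  have hx0 : 0 < x := by positivity
  have hxle : x ≤ 1 / 100 := (div_le_self hη0.le (one_le_pow₀ hB1)).trans hη1
  -- to the right of `1 + x` the inequality of Mertens suffices
  have right : ∀ z : ℂ, z.im = s.im → 1 + x ≤ z.re → z.re ≤ 2 →
      4 * M * η / B ^ 4 ≤ ‖riemannZeta z‖ := by
    intro z hz h3 h4
    have hBz : ht z = B := by simp [ht, hB, hz]
    have := hlow z (by rwa [hz]) (by linarith) h4
    rw [hBz] at this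
    refine le_of_pow_le_pow_left₀ (n := 4) (by norm_num) (norm_nonneg _) (le_trans ?_ this)
    have h5 : c₀ * x ^ 3 / B ≤ c₀ * (z.re - 1) ^ 3 / B := by gcongr; linarith
    refine le_trans ?_ h5
    rw [hx]
    have e : c₀ * (η / B ^ 5) ^ 3 / B = c₀ * η ^ 3 / B ^ 16 := by field_simp
    have e' : (4 * M * η / B ^ 4) ^ 4 = (256 * M ^ 4 * η) * η ^ 3 / B ^ 16 := by field_simp; ring
    rw [e, e']
    gcongr
  by_cases hs : 1 + x ≤ s.re
  · refine le_trans ?_ (right s rfl hs h2)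
    gcongr
    norm_num
  push Not at hs
  -- Left of `1 + x`, compare with the point `z` on the line `re z = 1 + x` at the same height.
  set z : ℂ := ⟨1 + x, s.im⟩ with hz
  have hzl := right z rfl le_rfl (by simp only [hz]; linarith)
  set T : Set ℂ := {w | 1 - 1 / 100 ≤ w.re} ∩ {w | w.re ≤ 2} ∩ {w | w.im = s.im} with hT
  have hconv : Convex ℝ T :=
    ((convex_halfSpace_re_ge _).inter (convex_halfSpace_re_le _)).inter
      (convex_hyperplane (IsLinearMap.mk Complex.add_im Complex.smul_im) _)
  have hdiff := Convex.norm_image_sub_le_of_norm_deriv_le (f := riemannZeta) (C := M * B) (s := T)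
    (x := s) (y := z) (𝕜 := ℂ)
    (fun w hw => differentiableAt_riemannZeta (ne_one_of_im (by
      have : w.im = s.im := hw.2
      rw [this]; linarith)))
    (fun w hw => by
      have e : w.im = s.im := hw.2
      have := norm_deriv_zeta_le (s := w) (by rwa [e]) hw.1.1 hw.1.2
      rwa [show ht w = B by simp [ht, hB, e]] at this)
    hconv ⟨⟨by simp only [Set.mem_ofPred_eq]; linarith, h2⟩, rfl⟩
    ⟨⟨by simp only [Set.mem_ofPred_eq, hz]; linarith, by simp only [Set.mem_ofPred_eq, hz]; linarith⟩, rfl⟩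
  have hzs : ‖z - s‖ ≤ 2 * x := by
    have e : z - s = ((1 + x - s.re : ℝ) : ℂ) := by
      apply Complex.ext <;> simp [hz]
    rw [e, Complex.norm_real, Real.norm_eq_abs, abs_of_nonneg (by linarith)]
    linarith
  have h6 : ‖riemannZeta z‖ ≤ ‖riemannZeta s‖ + M * B * (2 * x) := by
    have h7 : M * B * ‖z - s‖ ≤ M * B * (2 * x) := by gcongr
    have := norm_sub_norm_le (riemannZeta z) (riemannZeta s)
    linarith
  have e : M * B * (2 * x) = 2 * M * η / B ^ 4 := by rw [hx]; field_simp
  have e2 : 4 * M * η / B ^ 4 = 2 * M * η / B ^ 4 + 2 * M * η / B ^ 4 := by ring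
  linarith

/-- The function `-(deriv ζ / ζ) - ζ`, whose Dirichlet coefficients are `Λ n - 1`. It is written with
Mathlib's `ζ₁ s = (s - 1) ζ s` and `ζ₀ s = ζ s - 1 / (s - 1)`, so that the two poles at `s = 1` cancel
in the definition itself and `G` is analytic there; see `G_eq`. -/
noncomputable def G (s : ℂ) : ℂ := -(deriv riemannZeta₁ s / riemannZeta₁ s) - riemannZeta₀ s

lemma zeta_one_ne_zero_iff {s : ℂ} (hs : s ≠ 1) : riemannZeta₁ s ≠ 0 ↔ riemannZeta s ≠ 0 := by
  rw [riemannZeta_eq_inv_sub_mul hs]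
  simp [sub_ne_zero.2 hs]

lemma G_eq {s : ℂ} (hs : s ≠ 1) (hz : riemannZeta s ≠ 0) :
    G s = -(deriv riemannZeta s / riemannZeta s) - riemannZeta s := by
  have h1 : riemannZeta₁ s ≠ 0 := (zeta_one_ne_zero_iff hs).2 hz
  have hs' := sub_ne_zero.2 hs
  rw [G, deriv_riemannZeta_eq_neg_inv_sub_sq_mul_add hs]
  nth_rw 2 [riemannZeta_eq_inv_sub_add hs]
  rw [riemannZeta_eq_inv_sub_mul hs]
  field_simp
  ring

lemma G_analyticAt {s : ℂ} (hz : riemannZeta₁ s ≠ 0) : AnalyticAt ℂ G s := by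
  have h1 := differentiable_riemannZeta₁.analyticAt s
  have h0 := differentiable_riemannZeta₀.analyticAt s
  exact ((h1.deriv.div h1 hz).neg).sub h0

lemma zeta_one_ne_zero_of_one_le {s : ℂ} (hs : 1 ≤ s.re) : riemannZeta₁ s ≠ 0 := by
  by_cases h : s = 1
  · simp [h]
  · exact (zeta_one_ne_zero_iff h).2 (riemannZeta_ne_zero_of_one_le_re hs)

lemma G_deriv_bound_compact : ∃ C : ℝ, ∀ s : ℂ, |s.im| ≤ 4 → 1 ≤ s.re → s.re ≤ 2 →
    ‖iteratedDeriv 4 G s‖ ≤ C := by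
  have hc : IsCompact (Set.Icc (1 : ℝ) 2 ×ℂ Set.Icc (-4 : ℝ) 4) := isCompact_Icc.reProdIm isCompact_Icc
  have hcont : ContinuousOn (iteratedDeriv 4 G) (Set.Icc (1 : ℝ) 2 ×ℂ Set.Icc (-4 : ℝ) 4) := by
    intro s hs
    have := (G_analyticAt (zeta_one_ne_zero_of_one_le hs.1.1)).iterated_deriv 4
    rw [← iteratedDeriv_eq_iterate] at this
    exact this.continuousAt.continuousWithinAt
  obtain ⟨C, hC⟩ := hc.exists_bound_of_continuousOn hcont
  exact ⟨C, fun s h1 h2 h3 => hC s ⟨⟨h2, h3⟩, abs_le.1 h1⟩⟩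

/-- Cauchy's estimate for `G` on a circle of radius proportional to `ht s ^ (-5)`, which lies inside the
region of `zeta_lower`. There `G` is `O(ht ^ 5)`, so four derivatives give the exponent `5 + 4 * 5`. -/
lemma G_deriv_bound_high : ∃ C : ℝ, ∀ s : ℂ, 4 ≤ |s.im| → 1 ≤ s.re → s.re ≤ 3 / 2 →
    ‖iteratedDeriv 4 G s‖ ≤ C * ht s ^ 25 := by
  obtain ⟨η, c, hη0, hη1, hc, hlow⟩ := zeta_lower
  set K : ℝ := 13400 / c + 67 with hK
  have hK0 : 0 < K := by positivity
  have hG : ∀ s : ℂ, 2 ≤ |s.im| → 1 - η / ht s ^ 5 ≤ s.re → s.re ≤ 2 →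
      riemannZeta₁ s ≠ 0 ∧ ‖G s‖ ≤ K * ht s ^ 5 := by
    intro s ht1 h1 h2
    have hs1 : s ≠ 1 := ne_one_of_im (by linarith)
    have hB1 : 1 ≤ ht s := one_le_ht (by linarith)
    have hx : η / ht s ^ 5 ≤ 1 / 100 := (div_le_self hη0.le (one_le_pow₀ hB1)).trans hη1
    have hl := hlow s ht1 h1 h2
    have hl0 : 0 < c / ht s ^ 4 := by positivity
    have hne : riemannZeta s ≠ 0 := norm_pos_iff.1 (hl0.trans_le hl)
    refine ⟨(zeta_one_ne_zero_iff hs1).2 hne, ?_⟩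
    rw [G_eq hs1 hne]
    have b1 := norm_deriv_zeta_le ht1 (by linarith) h2
    have b2 := zeta_growth' (s := s) (by linarith) (by linarith) (by linarith)
    have b3 : ‖deriv riemannZeta s / riemannZeta s‖ ≤ 13400 * ht s / (c / ht s ^ 4) := by
      rw [norm_div]; gcongr
    have e : 13400 * ht s / (c / ht s ^ 4) = 13400 / c * ht s ^ 5 := by field_simp
    have b4 : ht s ≤ ht s ^ 5 := le_self_pow₀ hB1 (by norm_num)
    refine (norm_sub_le _ _).trans ?_
    rw [norm_neg, hK]
    linarith
  refine ⟨24 * (32 * K) / (η / 64) ^ 4, fun s ht1 h1 h2 => ?_⟩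
  set B := ht s with hB
  have hB1 : 1 ≤ B := one_le_ht (by linarith)
  -- On the disc of radius `r` the height is at most `2 B`, and `64 > 2 ^ 5` keeps the disc inside
  -- the region of `zeta_lower`.
  set r := η / 64 / B ^ 5 with hr
  have hr0 : 0 < r := by positivity
  have hr1 : r ≤ 1 / 100 := (div_le_self (by positivity) (one_le_pow₀ hB1)).trans (by linarith)
  have key : ∀ z ∈ Metric.closedBall s r, riemannZeta₁ z ≠ 0 ∧ ‖G z‖ ≤ 32 * K * B ^ 5 := by
    intro z hz
    obtain ⟨a, b, c⟩ := mem_sphere_bounds (by simpa [dist_eq_norm] using hz : ‖z - s‖ ≤ r)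
    rw [abs_le] at a
    have hBz : ht z ≤ 2 * B := ht_le_two_mul (by linarith)
    have hBz1 : 1 ≤ ht z := one_le_ht (by linarith)
    have hpow : ht z ^ 5 ≤ 32 * B ^ 5 := by
      calc ht z ^ 5 ≤ (2 * B) ^ 5 := by gcongr
        _ = _ := by ring
    have hle : r ≤ η / ht z ^ 5 := by
      calc r = η / (64 * B ^ 5) := by rw [hr]; field_simp
        _ ≤ _ := by gcongr; linarith [pow_nonneg (zero_le_one.trans hB1) 5]
    obtain ⟨p1, p2⟩ := hG z (by linarith) (by linarith) (by linarith)
    refine ⟨p1, p2.trans ?_⟩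
    calc K * ht z ^ 5 ≤ K * (32 * B ^ 5) := by gcongr
      _ = _ := by ring
  have := Complex.norm_iteratedDeriv_le_of_forall_mem_sphere_norm_le (f := G) (c := s)
    (R := r) (C := 32 * K * B ^ 5) 4 hr0 ?_
    (fun z hz => (key z (Metric.sphere_subset_closedBall hz)).2)
  · refine this.trans_eq ?_
    rw [hr]
    simp only [Nat.factorial]
    push_cast
    field_simp
  · apply DifferentiableOn.diffContOnCl
    rw [closure_ball _ hr0.ne']
    exact fun z hz => (G_analyticAt (key z hz).1).differentiableAt.differentiableWithinAt

/-- Uniform up to the line `re s = 1`, and integrable against a kernel of size `|im s| ^ (-2)`. -/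
lemma G_deriv_bound : ∃ C : ℝ, 0 < C ∧ ∀ s : ℂ, 1 ≤ s.re → s.re ≤ 3 / 2 →
    ‖iteratedDeriv 4 G s‖ ≤ C * (1 + |s.im|) ^ (1 / 2 : ℝ) := by
  obtain ⟨C₁, h₁⟩ := G_deriv_bound_compact
  obtain ⟨C₂, h₂⟩ := G_deriv_bound_high
  refine ⟨|C₁| + |C₂| + 1, by positivity, fun s hs1 hs2 => ?_⟩
  have hone : 1 ≤ (1 + |s.im|) ^ (1 / 2 : ℝ) :=
    Real.one_le_rpow (by linarith [abs_nonneg s.im]) (by norm_num)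
  rcases le_total |s.im| 4 with h | h
  · calc _ ≤ C₁ := h₁ s h hs1 (by linarith)
      _ ≤ (|C₁| + |C₂| + 1) * 1 := by linarith [le_abs_self C₁, abs_nonneg C₂]
      _ ≤ _ := by gcongr
  · have e : ht s ^ 25 = |s.im| ^ (1 / 2 : ℝ) := by
      rw [ht, ← Real.rpow_natCast, ← Real.rpow_mul (abs_nonneg _)]; norm_num
    calc _ ≤ C₂ * ht s ^ 25 := h₂ s h hs1 hs2
      _ ≤ (|C₁| + |C₂| + 1) * (1 + |s.im|) ^ (1 / 2 : ℝ) := by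
        rw [e]
        gcongr
        · linarith [le_abs_self C₂, abs_nonneg C₁]
        · linarith

/-! ### Dirichlet series of the fourth derivative and the Mellin kernel -/

/-- The coefficient `(Λ n - 1) (log n) ^ 4` of the Dirichlet series of the fourth derivative of `G`. -/
noncomputable def wt (n : ℕ) : ℝ := (ArithmeticFunction.vonMangoldt n - 1) * Real.log n ^ 4

/-- The coefficient `Λ n - 1` of the Dirichlet series of `G`. Its value at `n = 0` is immaterial, since
`LSeries` ignores it. -/
noncomputable def lam (n : ℕ) : ℂ := ((ArithmeticFunction.vonMangoldt n : ℝ) : ℂ) - 1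

lemma abscissa_lam : LSeries.abscissaOfAbsConv lam ≤ 1 := by
  refine LSeries.abscissaOfAbsConv_le_of_forall_lt_LSeriesSummable' fun y hy => ?_
  have hy' : 1 < ((y : ℂ)).re := by exact_mod_cast hy
  exact (ArithmeticFunction.LSeriesSummable_vonMangoldt hy').sub (LSeriesSummable_one_iff.2 hy')

lemma abscissa_lam_lt {s : ℂ} (hs : 1 < s.re) : LSeries.abscissaOfAbsConv lam < s.re :=
  abscissa_lam.trans_lt (by exact_mod_cast hs)

lemma logMul_four : LSeries.logMul^[4] lam = fun n => (wt n : ℂ) := by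
  ext n
  simp only [Function.iterate_succ, Function.iterate_zero, Function.comp, LSeries.logMul, lam, wt, id]
  push_cast
  ring

lemma G_eq_LSeries {s : ℂ} (hs : 1 < s.re) : G s = LSeries lam s := by
  rw [G_eq (by rintro rfl; simp at hs) (riemannZeta_ne_zero_of_one_le_re hs.le)]
  have h := LSeries_sub (ArithmeticFunction.LSeriesSummable_vonMangoldt hs)
    (LSeriesSummable_one_iff.2 hs)
  rw [ArithmeticFunction.LSeries_vonMangoldt_eq_deriv_riemannZeta_div hs,
    LSeries_one_eq_riemannZeta hs] at h
  rw [← neg_div, ← h]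
  rfl

lemma wt_summable {s : ℂ} (hs : 1 < s.re) : LSeriesSummable (fun n => (wt n : ℂ)) s := by
  rw [← logMul_four]
  apply LSeriesSummable_of_abscissaOfAbsConv_lt_re
  rw [LSeries.absicssaOfAbsConv_logPowMul]
  exact abscissa_lam_lt hs

lemma wt_LSeries {s : ℂ} (hs : 1 < s.re) :
    LSeries (fun n => (wt n : ℂ)) s = iteratedDeriv 4 G s := by
  have : G =ᶠ[nhds s] LSeries lam := by
    filter_upwards [(isOpen_lt continuous_const Complex.continuous_re).mem_nhds hs] with z hz
    exact G_eq_LSeries hz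
  rw [this.iteratedDeriv_eq, LSeries_iteratedDeriv 4 (abscissa_lam_lt hs), logMul_four]
  norm_num

/-- The smoothing weight `max (1 - u) 0` on `u > 0` (see `ramp_eq`), written as a difference of two
functions whose Mellin transforms are in Mathlib. It vanishes for `u ≤ 0`. -/
noncomputable def ramp (u : ℝ) : ℂ :=
  Set.indicator (Set.Ioc 0 1) (fun _ => (1 : ℂ)) u -
    Set.indicator (Set.Ioc 0 1) (fun t : ℝ => (t : ℂ) ^ (1 : ℂ)) u

lemma ramp_eq {u : ℝ} (hu : 0 < u) : ramp u = ((max (1 - u) 0 : ℝ) : ℂ) := by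
  unfold ramp
  rcases le_or_gt u 1 with h | h
  · have hm : u ∈ Set.Ioc (0 : ℝ) 1 := ⟨hu, h⟩
    rw [Set.indicator_of_mem hm, Set.indicator_of_mem hm, max_eq_left (by linarith)]
    simp
  · rw [Set.indicator_of_notMem (by simp [h]), Set.indicator_of_notMem (by simp [h]),
      max_eq_right (by linarith)]
    simp

lemma ramp_mellin {s : ℂ} (hs : 0 < s.re) : HasMellin ramp s (1 / (s * (s + 1))) := by
  have h1 := hasMellin_one_Ioc hs
  have h2 := hasMellin_cpow_Ioc 1 (s := s) (by simp; linarith)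
  have := hasMellin_sub h1.1 h2.1
  rw [h1.2, h2.2] at this
  have a : s ≠ 0 := by rintro rfl; simp at hs
  have b : s + 1 ≠ 0 := by
    intro h
    have := congrArg Complex.re h
    simp at this
    linarith
  have e : 1 / (s * (s + 1)) = 1 / s - 1 / (s + 1) := by field_simp; ring
  rw [e]
  exact this

lemma norm_kernel_le {σ : ℝ} (hσ : 1 ≤ σ) (y : ℝ) :
    ‖1 / (((σ : ℂ) + y * Complex.I) * ((σ : ℂ) + y * Complex.I + 1))‖ ≤
      2 * (1 + |y|) ^ (-2 : ℝ) := by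
  set s := (σ : ℂ) + y * Complex.I with hs
  have h1 : 1 + y ^ 2 ≤ ‖s‖ ^ 2 := by
    rw [← Complex.normSq_eq_norm_sq, Complex.normSq_apply]
    simp [hs]
    nlinarith
  have h2 : 1 + y ^ 2 ≤ ‖s + 1‖ ^ 2 := by
    rw [← Complex.normSq_eq_norm_sq, Complex.normSq_apply]
    simp [hs]
    nlinarith
  have h3 : 1 + y ^ 2 ≤ ‖s‖ * ‖s + 1‖ := by
    apply abs_le_of_sq_le_sq' _ (by positivity) |>.2
    rw [mul_pow, sq]
    gcongr
  rw [norm_div, norm_one, norm_mul, Real.rpow_neg (by positivity), Real.rpow_two,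
    div_le_iff₀ (by nlinarith [sq_nonneg y])]
  have h4 : (1 + |y|) ^ 2 ≤ 2 * (1 + y ^ 2) := by
    rw [← sq_abs y]; nlinarith [sq_nonneg (1 - |y|)]
  have h5 : 0 < (1 + |y|) ^ 2 := by positivity
  rw [mul_assoc, ← div_eq_inv_mul, ← mul_div_assoc, le_div_iff₀ h5]
  linarith

lemma integrable_abs_pow {r : ℝ} (hr : 1 < r) :
    MeasureTheory.Integrable (fun y : ℝ => (1 + |y|) ^ (-r)) := by
  have := integrable_one_add_norm (E := ℝ) (μ := MeasureTheory.volume) (r := r) (by simpa using hr)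
  simpa using this

lemma kernel_integrable {σ : ℝ} (hσ : 1 ≤ σ) :
    MeasureTheory.Integrable (fun y : ℝ =>
      1 / (((σ : ℂ) + y * Complex.I) * ((σ : ℂ) + y * Complex.I + 1))) := by
  refine ((integrable_abs_pow (r := 2) (by norm_num)).const_mul 2).mono' ?_
    (MeasureTheory.ae_of_all _ fun y => norm_kernel_le hσ y)
  exact (by fun_prop : Measurable _).aestronglyMeasurable

/-- Mellin inversion for `ramp`; its transform `1 / (s (s + 1))` is absolutely integrable on vertical
lines. -/
lemma ramp_inversion {σ : ℝ} (hσ : 1 ≤ σ) {x : ℝ} (hx : 0 < x) :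
    ((max (1 - x) 0 : ℝ) : ℂ) = (1 / (2 * Real.pi) : ℝ) • ∫ y : ℝ,
      (x : ℂ) ^ (-((σ : ℂ) + y * Complex.I)) *
      (1 / (((σ : ℂ) + y * Complex.I) * ((σ : ℂ) + y * Complex.I + 1))) := by
  have hm (y : ℝ) : mellin ramp ((σ : ℂ) + y * Complex.I) =
      1 / (((σ : ℂ) + y * Complex.I) * ((σ : ℂ) + y * Complex.I + 1)) :=
    (ramp_mellin (by simp; linarith)).2
  have h := mellinInv_mellin_eq σ ramp hx (ramp_mellin (by simp; linarith)).1 ?_ ?_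
  · rw [← ramp_eq hx, ← h, mellinInv]
    simp_rw [hm, smul_eq_mul]
  · unfold Complex.VerticalIntegrable
    simp_rw [hm]
    exact kernel_integrable hσ
  · have : ramp =ᶠ[nhds x] fun u => ((max (1 - u) 0 : ℝ) : ℂ) := by
      filter_upwards [lt_mem_nhds hx] with u hu using ramp_eq hu
    rw [continuousAt_congr this]
    fun_prop

/-! ### The smoothed sum -/

/-- The smoothed sum is the integral of `iteratedDeriv 4 G s * x ^ s / (s (s + 1))` along `re s = σ`, divided by
`2 π i`.
Since the bound for the fourth derivative is uniform, the resulting estimate does not degenerate as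
`σ → 1`. -/
lemma perron_sigma {C : ℝ} (hG : ∀ s : ℂ, 1 ≤ s.re → s.re ≤ 3 / 2 →
    ‖iteratedDeriv 4 G s‖ ≤ C * (1 + |s.im|) ^ (1 / 2 : ℝ)) {σ x : ℝ} (h1 : 1 < σ) (h2 : σ ≤ 3 / 2)
    (hx : 0 < x) : |∑' n : ℕ, wt n * max (1 - n / x) 0| ≤
      x ^ σ * (2 * C * ∫ y : ℝ, (1 + |y|) ^ (-(3 / 2) : ℝ)) := by
  set k : ℝ → ℂ := fun y =>
    1 / (((σ : ℂ) + y * Complex.I) * ((σ : ℂ) + y * Complex.I + 1)) with hk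
  set w : ℕ → ℂ := fun n => (wt n : ℂ) with hw
  set F : ℕ → ℝ → ℂ := fun n y =>
    LSeries.term w ((σ : ℂ) + y * Complex.I) n * ((x : ℂ) ^ ((σ : ℂ) + y * Complex.I) * k y) with hF
  have hkint := kernel_integrable h1.le
  have hxn (y : ℝ) : ‖(x : ℂ) ^ ((σ : ℂ) + y * Complex.I)‖ = x ^ σ := by
    rw [Complex.norm_cpow_eq_rpow_re_of_pos hx]; simp
  have hFn (n : ℕ) (y : ℝ) : ‖F n y‖ = ‖LSeries.term w σ n‖ * x ^ σ * ‖k y‖ := by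
    rw [hF]
    simp only
    rw [norm_mul, norm_mul, hxn, LSeries.norm_term_eq, LSeries.norm_term_eq]
    simp [mul_assoc]
  have hFmeas (n : ℕ) : MeasureTheory.AEStronglyMeasurable (F n) := by
    refine (Measurable.aestronglyMeasurable ?_)
    rw [hF]
    simp only [LSeries.term, hk]
    split_ifs <;> fun_prop
  have hFint (n : ℕ) : MeasureTheory.Integrable (F n) := by
    refine (hkint.norm.const_mul (‖LSeries.term w σ n‖ * x ^ σ)).mono' (hFmeas n)
      (MeasureTheory.ae_of_all _ fun y => (hFn n y).le)
  have hsum : Summable fun n => ∫ y, ‖F n y‖ := by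
    simp_rw [hFn, MeasureTheory.integral_const_mul]
    have := wt_summable (s := σ) (by simpa using h1)
    exact ((summable_norm_iff.2 this).mul_right _).mul_right _
  have key := MeasureTheory.hasSum_integral_of_summable_integral_norm hFint hsum
  have hI (n : ℕ) : ∫ y, F n y = ((2 * Real.pi * (wt n * max (1 - n / x) 0) : ℝ) : ℂ) := by
    rcases Nat.eq_zero_or_pos n with rfl | hn
    · simp [hF, LSeries.term, wt]
    have hn' : (0 : ℝ) < n := by exact_mod_cast hn
    have hr := ramp_inversion h1.le (div_pos hn' hx)
    have e : ∀ y : ℝ, F n y = w n * ((((n / x : ℝ)) : ℂ) ^ (-((σ : ℂ) + y * Complex.I)) *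
      (1 / (((σ : ℂ) + y * Complex.I) * ((σ : ℂ) + y * Complex.I + 1)))) := by
      intro y
      have hx' : (x : ℂ) ^ ((σ : ℂ) + y * Complex.I) ≠ 0 := by
        rw [← norm_pos_iff, hxn]; positivity
      rw [hF]
      simp only
      rw [LSeries.term_of_ne_zero hn.ne', Complex.cpow_neg, Complex.ofReal_div,
        Complex.div_cpow_ofReal_nonneg hn'.le hx.le, inv_div]
      push_cast
      ring
    simp_rw [e]
    rw [MeasureTheory.integral_const_mul]
    rw [Complex.real_smul] at hr
    generalize (∫ y : ℝ, ((((n / x : ℝ)) : ℂ) ^ (-((σ : ℂ) + y * Complex.I)) *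
      (1 / (((σ : ℂ) + y * Complex.I) * ((σ : ℂ) + y * Complex.I + 1))))) = I at hr ⊢
    rw [Complex.ofReal_mul, Complex.ofReal_mul (wt n), hr]
    push_cast
    have hpi : (Real.pi : ℂ) ≠ 0 := by exact_mod_cast Real.pi_ne_zero
    field_simp
    exact mul_comm _ _
  have hT : ∫ y, ∑' n, F n y = ((2 * Real.pi * ∑' n : ℕ, (wt n * max (1 - n / x) 0) : ℝ) : ℂ) := by
    rw [← key.tsum_eq]
    simp_rw [hI]
    rw [← Complex.ofReal_tsum, tsum_mul_left]
  have hB : ‖∫ y, ∑' n, F n y‖ ≤ ∫ y : ℝ, (x ^ σ * (2 * C)) * (1 + |y|) ^ (-(3 / 2) : ℝ) := by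
    refine MeasureTheory.norm_integral_le_of_norm_le
      ((integrable_abs_pow (r := 3 / 2) (by norm_num)).const_mul _)
      (MeasureTheory.ae_of_all _ fun y => ?_)
    have hre : ((σ : ℂ) + y * Complex.I).re = σ := by simp
    have him : ((σ : ℂ) + y * Complex.I).im = y := by simp
    have e : ∑' n, F n y = iteratedDeriv 4 G ((σ : ℂ) + y * Complex.I) *
        ((x : ℂ) ^ ((σ : ℂ) + y * Complex.I) * k y) := by
      rw [hF]
      simp only
      rw [tsum_mul_right, ← wt_LSeries (by rw [hre]; exact h1)]
      rfl
    have b := hG ((σ : ℂ) + y * Complex.I) (by rw [hre]; exact h1.le) (by rw [hre]; exact h2)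
    rw [him] at b
    have p : (0 : ℝ) < 1 + |y| := by positivity
    have hC : 0 ≤ C * (1 + |y|) ^ (1 / 2 : ℝ) := (norm_nonneg _).trans b
    rw [e, norm_mul, norm_mul, hxn]
    calc _ ≤ (C * (1 + |y|) ^ (1 / 2 : ℝ)) * (x ^ σ * (2 * (1 + |y|) ^ (-2 : ℝ))) := by
          gcongr
          exact norm_kernel_le h1.le y
      _ = (x ^ σ * (2 * C)) * ((1 + |y|) ^ (1 / 2 : ℝ) * (1 + |y|) ^ (-2 : ℝ)) := by ring
      _ = _ := by rw [← Real.rpow_add p]; norm_num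
  rw [hT, Complex.norm_real, Real.norm_eq_abs, abs_mul, abs_of_pos (by positivity : 0 < 2 * Real.pi),
    MeasureTheory.integral_const_mul] at hB
  have hpi : 1 ≤ 2 * Real.pi := by linarith [Real.pi_gt_three]
  calc _ ≤ 2 * Real.pi * |∑' n : ℕ, wt n * max (1 - n / x) 0| :=
        le_mul_of_one_le_left (abs_nonneg _) hpi
    _ ≤ _ := by rw [mul_assoc (x ^ σ)] at hB; exact hB

/-- The limit `σ → 1` of `perron_sigma`, for integral `x = N`. -/
lemma smooth_bound : ∃ K : ℝ, 0 < K ∧ ∀ N : ℕ,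
    |∑ n ∈ range N, wt n * ((N : ℝ) - n)| ≤ K * (N : ℝ) ^ 2 := by
  obtain ⟨C, hC, hG⟩ := G_deriv_bound
  set K := 2 * C * ∫ y : ℝ, (1 + |y|) ^ (-(3 / 2) : ℝ)
  refine ⟨|K| + 1, by positivity, fun N => ?_⟩
  rcases Nat.eq_zero_or_pos N with rfl | hN
  · simp
  have hN' : (0 : ℝ) < N := by exact_mod_cast hN
  have lim : Tendsto (fun σ : ℝ => (N : ℝ) ^ σ * K) (nhdsWithin 1 (Set.Ioi 1)) (nhds (N * K)) := by
    have : ContinuousAt (fun σ : ℝ => (N : ℝ) ^ σ * K) 1 :=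
      (Real.continuousAt_const_rpow hN'.ne').mul_const _
    have := this.tendsto.mono_left (nhdsWithin_le_nhds (s := Set.Ioi 1))
    simpa using this
  have hle : |∑' n : ℕ, wt n * max (1 - n / (N : ℝ)) 0| ≤ N * K := by
    refine ge_of_tendsto lim ?_
    filter_upwards [Ioc_mem_nhdsGT (show (1 : ℝ) < 3 / 2 by norm_num)] with σ hσ
    exact perron_sigma hG hσ.1 hσ.2 hN'
  rw [tsum_eq_sum (s := range N)] at hle
  · have e : ∑ n ∈ range N, wt n * ((N : ℝ) - n) =
        N * ∑ n ∈ range N, wt n * max (1 - n / (N : ℝ)) 0 := by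
      rw [Finset.mul_sum]
      refine Finset.sum_congr rfl fun n hn => ?_
      have : (n : ℝ) ≤ N := by exact_mod_cast (Finset.mem_range.1 hn).le
      rw [max_eq_left (by rw [sub_nonneg, div_le_one hN']; exact this)]
      field_simp
    rw [e, abs_mul, abs_of_pos hN']
    calc _ ≤ N * (N * K) := by gcongr
      _ = K * (N : ℝ) ^ 2 := by ring
      _ ≤ _ := by gcongr; linarith [le_abs_self K]
  · intro n hn
    have : (N : ℝ) ≤ n := by exact_mod_cast not_lt.1 (fun h => hn (Finset.mem_range.2 h))
    rw [max_eq_right (by rw [sub_nonpos, one_le_div hN']; exact this), mul_zero]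

/-! ### Removing the smoothing; summation by parts -/

lemma one_le_log {x : ℝ} (h : 3 ≤ x) : 1 ≤ Real.log x := by
  rw [Real.le_log_iff_exp_le (by linarith)]
  linarith [Real.exp_one_lt_d9]

/-- Because `Λ ≥ 0`, the weights are bounded below; this is what makes removing the smoothing possible. -/
lemma wt_ge {n M : ℕ} (h : n ≤ M) : -Real.log M ^ 4 ≤ wt n := by
  have h0 := Real.log_natCast_nonneg n
  have h1 : Real.log n ≤ Real.log M := by
    rcases Nat.eq_zero_or_pos n with rfl | hn
    · simpa using Real.log_natCast_nonneg M
    · apply Real.log_le_log (by exact_mod_cast hn); exact_mod_cast h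
  have h2 : Real.log n ^ 4 ≤ Real.log M ^ 4 := by gcongr
  have h3 : 0 ≤ ArithmeticFunction.vonMangoldt n := ArithmeticFunction.vonMangoldt_nonneg
  have h4 : 0 ≤ Real.log n ^ 4 := by positivity
  unfold wt
  nlinarith

/-- The difference of two smoothed sums, as `h` times the sharply truncated sum plus a sum over a short
interval. -/
lemma smooth_diff (N h : ℕ) : ∑ n ∈ range (N + h), wt n * (((N + h : ℕ) : ℝ) - n) -
    ∑ n ∈ range N, wt n * ((N : ℝ) - n) =
    h * ∑ n ∈ range N, wt n + ∑ n ∈ Ico N (N + h), wt n * (((N + h : ℕ) : ℝ) - n) := by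
  rw [← sum_range_add_sum_Ico _ (Nat.le_add_right N h), mul_sum, add_sub_right_comm, ← sum_sub_distrib]
  congr 1
  refine sum_congr rfl fun n _ => ?_
  push_cast; ring

lemma E_upper {K : ℝ} (hK : ∀ N : ℕ, |∑ n ∈ range N, wt n * ((N : ℝ) - n)| ≤ K * (N : ℝ) ^ 2)
    (hK0 : 0 < K) (N h : ℕ) :
    h * ∑ n ∈ range N, wt n ≤ 2 * K * ((N + h : ℕ) : ℝ) ^ 2 + h ^ 2 * Real.log ((N + h : ℕ) : ℝ) ^ 4 := by
  have e := smooth_diff N h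
  have a1 := abs_le.1 (hK (N + h))
  have a2 := abs_le.1 (hK N)
  have a3 : K * (N : ℝ) ^ 2 ≤ K * ((N + h : ℕ) : ℝ) ^ 2 := by gcongr; simp
  have a4 : -((h : ℝ) * (h * Real.log ((N + h : ℕ) : ℝ) ^ 4)) ≤
      ∑ n ∈ Ico N (N + h), wt n * (((N + h : ℕ) : ℝ) - n) := by
    have : ∑ n ∈ Ico N (N + h), -(h * Real.log ((N + h : ℕ) : ℝ) ^ 4) ≤
      ∑ n ∈ Ico N (N + h), wt n * (((N + h : ℕ) : ℝ) - n) := by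
      refine sum_le_sum fun n hn => ?_
      obtain ⟨p1, p2⟩ := mem_Ico.1 hn
      have q1 : (N : ℝ) ≤ n := by exact_mod_cast p1
      have q2 : (n : ℝ) ≤ ((N + h : ℕ) : ℝ) := by exact_mod_cast p2.le
      have q3 := wt_ge p2.le
      have q4 : 0 ≤ Real.log ((N + h : ℕ) : ℝ) ^ 4 := by positivity
      have q5 : ((N + h : ℕ) : ℝ) - n ≤ h := by push_cast; linarith
      nlinarith
    simpa using this
  nlinarith

lemma E_lower {K : ℝ} (hK : ∀ N : ℕ, |∑ n ∈ range N, wt n * ((N : ℝ) - n)| ≤ K * (N : ℝ) ^ 2)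
    (hK0 : 0 < K) (N h : ℕ) :
    -(2 * K * ((N + h : ℕ) : ℝ) ^ 2 + h ^ 2 * Real.log ((N + h : ℕ) : ℝ) ^ 4) ≤
      h * ∑ n ∈ range (N + h), wt n := by
  have e := smooth_diff N h
  have a1 := abs_le.1 (hK (N + h))
  have a2 := abs_le.1 (hK N)
  have a3 : K * (N : ℝ) ^ 2 ≤ K * ((N + h : ℕ) : ℝ) ^ 2 := by gcongr; simp
  have a4 : -((h : ℝ) * (h * Real.log ((N + h : ℕ) : ℝ) ^ 4)) ≤
      ∑ n ∈ Ico N (N + h), wt n * (h - (((N + h : ℕ) : ℝ) - n)) := by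
    have : ∑ n ∈ Ico N (N + h), -(h * Real.log ((N + h : ℕ) : ℝ) ^ 4) ≤
      ∑ n ∈ Ico N (N + h), wt n * (h - (((N + h : ℕ) : ℝ) - n)) := by
      refine sum_le_sum fun n hn => ?_
      obtain ⟨p1, p2⟩ := mem_Ico.1 hn
      have q1 : (N : ℝ) ≤ n := by exact_mod_cast p1
      have q2 : (n : ℝ) ≤ ((N + h : ℕ) : ℝ) := by exact_mod_cast p2.le
      have q3 := wt_ge p2.le
      have q4 : 0 ≤ Real.log ((N + h : ℕ) : ℝ) ^ 4 := by positivity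
      have q5 : ((N + h : ℕ) : ℝ) - n ≤ h := by push_cast; linarith
      nlinarith
    simpa using this
  have e2 : (h : ℝ) * ∑ n ∈ range (N + h), wt n = h * ∑ n ∈ range N, wt n +
      ∑ n ∈ Ico N (N + h), wt n * (((N + h : ℕ) : ℝ) - n) +
      ∑ n ∈ Ico N (N + h), wt n * (h - (((N + h : ℕ) : ℝ) - n)) := by
    rw [← sum_range_add_sum_Ico _ (Nat.le_add_right N h), mul_add, add_assoc, ← sum_add_distrib, mul_sum (Ico _ _)]
    congr 1
    refine sum_congr rfl fun n _ => ?_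
    ring
  nlinarith

/-- The sharply truncated sum of `wt`, obtained by comparing smoothed sums at distance
`h ≈ N / (log N) ^ 2` and using that `wt` is bounded below. -/
lemma E_bound : ∃ K : ℝ, 0 < K ∧ ∀ N : ℕ, 3 ≤ N →
    |∑ n ∈ range N, wt n| ≤ K * (N * Real.log N ^ 2) := by
  obtain ⟨K, hK0, hK⟩ := smooth_bound
  refine ⟨8 * K + 80, by positivity, fun N hN => ?_⟩
  have hN3 : (3 : ℝ) ≤ N := by exact_mod_cast hN
  set L := Real.log N with hL
  have hL1 : 1 ≤ L := one_le_log hN3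
  have hL2 : L ^ 2 ≤ 4 * N := by
    have := Real.log_le_rpow_div (x := N) (by positivity) (show (0 : ℝ) < 1 / 2 by norm_num)
    rw [← Real.sqrt_eq_rpow] at this
    calc L ^ 2 ≤ (√(N : ℝ) / (1 / 2)) ^ 2 := by gcongr
      _ = 4 * √(N : ℝ) ^ 2 := by ring
      _ = 4 * N := by rw [Real.sq_sqrt (by positivity)]
  -- This `h` balances the two error terms `N ^ 2` and `h ^ 2 L ^ 4` of `E_upper` and `E_lower`.
  set h := ⌈(N : ℝ) / L ^ 2⌉₊ with hh
  have h1 : (N : ℝ) / L ^ 2 ≤ h := Nat.le_ceil _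
  have h2 : (h : ℝ) < N / L ^ 2 + 1 := Nat.ceil_lt_add_one (by positivity)
  have h3 : (h : ℝ) ≤ 5 * (N / L ^ 2) := by
    have : 1 ≤ 4 * (N / L ^ 2) := by
      rw [← mul_div_assoc, le_div_iff₀ (by positivity)]; linarith
    linarith
  have h4 : h ≤ N := by
    apply Nat.ceil_le.2
    exact div_le_self (by positivity) (one_le_pow₀ hL1)
  have hh0 : (0 : ℝ) < h := lt_of_lt_of_le (by positivity) h1
  have b1 : (N : ℝ) ^ 2 ≤ h * (N * L ^ 2) := by
    calc (N : ℝ) ^ 2 = N / L ^ 2 * (N * L ^ 2) := by field_simp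
      _ ≤ _ := by gcongr
  have b2 : (h : ℝ) ^ 2 * (2 * L) ^ 4 ≤ 80 * (h * (N * L ^ 2)) := by
    calc (h : ℝ) ^ 2 * (2 * L) ^ 4 = 16 * h * L ^ 4 * h := by ring
      _ ≤ 16 * h * L ^ 4 * (5 * (N / L ^ 2)) := by gcongr
      _ = _ := by field_simp; norm_num
  have c (M : ℕ) (hM0 : 0 < M) (hM : M ≤ 2 * N) :
      2 * K * (M : ℝ) ^ 2 + h ^ 2 * Real.log M ^ 4 ≤ h * ((8 * K + 80) * (N * L ^ 2)) := by
    have hM' : (M : ℝ) ≤ 2 * N := by exact_mod_cast hM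
    have hlM : Real.log M ≤ 2 * L := by
      calc Real.log M ≤ Real.log (N ^ 2) := by
            apply Real.log_le_log (by exact_mod_cast hM0); nlinarith
        _ = 2 * L := by rw [Real.log_pow]; norm_num [hL]
    have hlM0 := Real.log_natCast_nonneg M
    calc 2 * K * (M : ℝ) ^ 2 + h ^ 2 * Real.log M ^ 4
        ≤ 2 * K * (2 * N) ^ 2 + h ^ 2 * (2 * L) ^ 4 := by gcongr
      _ = 8 * K * N ^ 2 + h ^ 2 * (2 * L) ^ 4 := by ring
      _ ≤ 8 * K * (h * (N * L ^ 2)) + 80 * (h * (N * L ^ 2)) := by gcongr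
      _ = _ := by ring
  rw [abs_le]
  constructor
  · have := E_lower hK hK0 (N - h) h
    rw [Nat.sub_add_cancel h4] at this
    have := (neg_le_neg (c N (by omega) (by omega))).trans this
    rw [← mul_neg] at this
    exact le_of_mul_le_mul_left this hh0
  · have := (E_upper hK hK0 N h).trans (c (N + h) (by omega) (by omega))
    exact le_of_mul_le_mul_left this hh0

lemma abel_identity (f g : ℕ → ℝ) {a b : ℕ} (hab : a ≤ b) :
    ∑ n ∈ Ico a b, f n * g n = (∑ n ∈ range b, f n) * g b - (∑ n ∈ range a, f n) * g a -
      ∑ n ∈ Ico a b, (∑ k ∈ range (n + 1), f k) * (g (n + 1) - g n) := by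
  induction b, hab using Nat.le_induction with
  | base => simp
  | succ b hab ih =>
    rw [sum_Ico_succ_top hab, sum_Ico_succ_top hab, ih, sum_range_succ]
    ring

/-- Summation by parts against a nondecreasing `g`, whose total variation is `g b - g a`. -/
lemma abel_bound {f g : ℕ → ℝ} {a b : ℕ} (hab : a ≤ b) {M : ℝ}
    (hF : ∀ m, a ≤ m → m ≤ b → |∑ n ∈ range m, f n| ≤ M)
    (hg : ∀ n, a ≤ n → n < b → g n ≤ g (n + 1)) :
    |∑ n ∈ Ico a b, f n * g n| ≤ 2 * M * (|g a| + |g b|) := by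
  have hM : 0 ≤ M := (abs_nonneg _).trans (hF a le_rfl hab)
  rw [abel_identity f g hab]
  have h1 : |∑ n ∈ Ico a b, (∑ k ∈ range (n + 1), f k) * (g (n + 1) - g n)| ≤ M * (g b - g a) := by
    calc _ ≤ ∑ n ∈ Ico a b, M * (g (n + 1) - g n) := by
          refine (abs_sum_le_sum_abs _ _).trans (sum_le_sum fun n hn => ?_)
          obtain ⟨p1, p2⟩ := mem_Ico.1 hn
          rw [abs_mul, abs_of_nonneg (sub_nonneg.2 (hg n p1 p2))]
          exact mul_le_mul_of_nonneg_right (hF _ (by omega) (by omega)) (sub_nonneg.2 (hg n p1 p2))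
      _ = _ := by rw [← mul_sum, sum_Ico_sub g hab]
  have h2 : |(∑ n ∈ range b, f n) * g b| ≤ M * |g b| := by
    rw [abs_mul]; gcongr; exact hF b hab le_rfl
  have h3 : |(∑ n ∈ range a, f n) * g a| ≤ M * |g a| := by
    rw [abs_mul]; gcongr; exact hF a le_rfl hab
  have h4 : M * (g b - g a) ≤ M * (|g b| + |g a|) := by
    gcongr
    linarith [le_abs_self (g b), neg_abs_le (g a)]
  refine (abs_sub _ _).trans ?_
  have := abs_sub ((∑ n ∈ range b, f n) * g b) ((∑ n ∈ range a, f n) * g a)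
  linarith

/-- Summation by parts against a nonincreasing `g`. -/
lemma abel_bound' {f g : ℕ → ℝ} {a b : ℕ} (hab : a ≤ b) {M : ℝ}
    (hF : ∀ m, a ≤ m → m ≤ b → |∑ n ∈ range m, f n| ≤ M)
    (hg : ∀ n, a ≤ n → n < b → g (n + 1) ≤ g n) :
    |∑ n ∈ Ico a b, f n * g n| ≤ 2 * M * (|g a| + |g b|) := by
  have := abel_bound (g := fun n => -g n) hab hF (fun n h1 h2 => neg_le_neg (hg n h1 h2))
  simpa using this

/-! ### The prime number theorem with error term -/

lemma log_cube_le {x : ℝ} (hx : 0 ≤ x) (h1 : 0 ≤ Real.log x) : Real.log x ^ 3 ≤ 216 * √x := by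
  -- `216 = 6 ^ 3` comes from `log x ≤ 6 x ^ (1 / 6)`.
  have := Real.log_le_rpow_div (x := x) hx (show (0 : ℝ) < 1 / 6 by norm_num)
  calc Real.log x ^ 3 ≤ (x ^ (1 / 6 : ℝ) / (1 / 6)) ^ 3 := by gcongr
    _ = 216 * (x ^ (1 / 6 : ℝ)) ^ (3 : ℕ) := by ring
    _ = 216 * √x := by
      rw [← Real.rpow_natCast, ← Real.rpow_mul hx, Real.sqrt_eq_rpow]; norm_num

/-- A cut `a ≈ √N`. Terms below it contribute a negligible amount trivially, and above it `log n` is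
comparable to `log N`. -/
lemma split_point {N : ℕ} (hN : 9 ≤ N) : ∃ a : ℕ, 3 ≤ a ∧ a ≤ N ∧ (a : ℝ) ≤ 2 * √(N : ℝ) ∧
    N < a * a ∧ Real.log N ≤ 2 * Real.log a := by
  have hN' : (9 : ℝ) ≤ N := by exact_mod_cast hN
  have h3 : 3 ≤ Nat.sqrt N := Nat.le_sqrt.2 (by omega)
  have h4 : (Nat.sqrt N : ℝ) ≤ √(N : ℝ) := Real.nat_sqrt_le_real_sqrt
  have h5 : √(N : ℝ) ≤ Nat.sqrt N + 1 := Real.real_sqrt_le_nat_sqrt_succ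
  have h6 : (3 : ℝ) ≤ Nat.sqrt N := by exact_mod_cast h3
  refine ⟨Nat.sqrt N + 1, by omega, ?_, ?_, ?_, ?_⟩
  · have := Nat.sqrt_le N
    nlinarith
  · push_cast; linarith
  · exact Nat.lt_succ_sqrt N
  · have : Real.log √(N : ℝ) ≤ Real.log ((Nat.sqrt N + 1 : ℕ) : ℝ) := by
      apply Real.log_le_log (by positivity)
      push_cast; exact h5
    rw [Real.log_sqrt (by positivity)] at this
    linarith

/-- The prime number theorem for the von Mangoldt function with error `O(N / (log N) ^ 2)`: divide the
weights in `E_bound` by `(log n) ^ 4` by partial summation. -/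
lemma vM_bound : ∃ K : ℝ, 0 < K ∧ ∀ N : ℕ, 9 ≤ N →
    |∑ n ∈ range N, (ArithmeticFunction.vonMangoldt n - 1)| ≤ K * (N / Real.log N ^ 2) := by
  obtain ⟨K, hK0, hK⟩ := E_bound
  refine ⟨864 + 64 * K, by positivity, fun N hN => ?_⟩
  obtain ⟨a, ha3, haN, ha1, ha2, hlog⟩ := split_point hN
  have hN9 : (9 : ℝ) ≤ N := by exact_mod_cast hN
  have hlN : 1 ≤ Real.log N := one_le_log (by linarith)
  have ha3' : (3 : ℝ) ≤ a := by exact_mod_cast ha3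
  have hla : 1 ≤ Real.log a := one_le_log ha3'
  rw [← sum_range_add_sum_Ico _ haN]
  have hfirst : |∑ n ∈ range a, (ArithmeticFunction.vonMangoldt n - 1)| ≤
      864 * (N / Real.log N ^ 2) := by
    calc _ ≤ ∑ n ∈ range a, 2 * Real.log N := by
          refine (abs_sum_le_sum_abs _ _).trans (sum_le_sum fun n hn => ?_)
          have hn : n < a := mem_range.1 hn
          have h0 : 0 ≤ ArithmeticFunction.vonMangoldt n := ArithmeticFunction.vonMangoldt_nonneg
          have h1 : ArithmeticFunction.vonMangoldt n ≤ Real.log n := ArithmeticFunction.vonMangoldt_le_log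
          have h2 : Real.log n ≤ Real.log N := by
            rcases Nat.eq_zero_or_pos n with rfl | hn0
            · simp; linarith
            · apply Real.log_le_log (by exact_mod_cast hn0); exact_mod_cast (by omega)
          rw [abs_le]; constructor <;> linarith
      _ = 2 * a * Real.log N := by simp; ring
      _ ≤ 2 * (2 * √(N : ℝ)) * Real.log N := by gcongr
      _ = 4 * √(N : ℝ) * (Real.log N ^ 3 / Real.log N ^ 2) := by field_simp; norm_num
      _ ≤ 4 * √(N : ℝ) * (216 * √(N : ℝ) / Real.log N ^ 2) := by
          gcongr; exact log_cube_le (by positivity) (by positivity)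
      _ = 864 * (√(N : ℝ) ^ 2 / Real.log N ^ 2) := by ring
      _ = _ := by rw [Real.sq_sqrt (by positivity)]
  have hsecond : |∑ n ∈ Ico a N, (ArithmeticFunction.vonMangoldt n - 1)| ≤
      64 * K * (N / Real.log N ^ 2) := by
    have e : ∑ n ∈ Ico a N, (ArithmeticFunction.vonMangoldt n - 1) =
        ∑ n ∈ Ico a N, wt n * (Real.log n ^ 4)⁻¹ := by
      refine sum_congr rfl fun n hn => ?_
      have : (3 : ℝ) ≤ n := by exact_mod_cast ha3.trans (mem_Ico.1 hn).1
      have := one_le_log this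
      unfold wt
      field_simp
    rw [e]
    have hF : ∀ m, a ≤ m → m ≤ N → |∑ n ∈ range m, wt n| ≤ K * (N * Real.log N ^ 2) := by
      intro m h1 h2
      have h2' : (m : ℝ) ≤ N := by exact_mod_cast h2
      have h1' : (3 : ℝ) ≤ m := by exact_mod_cast ha3.trans h1
      have := one_le_log h1'
      refine (hK m (ha3.trans h1)).trans ?_
      gcongr
    refine (abel_bound' haN hF ?_).trans ?_
    · intro n h1 h2
      have h1' : (3 : ℝ) ≤ n := by exact_mod_cast ha3.trans h1
      have := one_le_log h1'
      gcongr
      simp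
    · have b1 : (Real.log a ^ 4)⁻¹ ≤ 16 * (Real.log N ^ 4)⁻¹ := by
        rw [← div_eq_mul_inv, inv_eq_one_div, div_le_div_iff₀ (by positivity) (by positivity)]
        calc 1 * Real.log N ^ 4 ≤ 1 * (2 * Real.log a) ^ 4 := by gcongr
          _ = _ := by ring
      have b2 : (Real.log N ^ 4)⁻¹ ≤ 16 * (Real.log N ^ 4)⁻¹ :=
        le_mul_of_one_le_left (by positivity) (by norm_num)
      rw [abs_of_pos (by positivity), abs_of_pos (by positivity)]
      calc _ ≤ 2 * (K * (N * Real.log N ^ 2)) * (16 * (Real.log N ^ 4)⁻¹ + 16 * (Real.log N ^ 4)⁻¹) := by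
            gcongr
        _ = _ := by field_simp; norm_num
  calc _ ≤ _ := abs_add_le _ _
    _ ≤ _ := add_le_add hfirst hsecond
    _ = _ := by ring

/-- The weight of the first Chebyshev function: `log n` if `n` is prime, and `0` otherwise. -/
noncomputable def lp (n : ℕ) : ℝ := if n.Prime then Real.log n else 0

lemma sum_lp (N : ℕ) : ∑ n ∈ range (N + 1), lp n = Chebyshev.theta N := by
  rw [Chebyshev.theta_eq_sum_Icc, Nat.floor_natCast, sum_filter, Finset.range_eq_Ico]
  rfl

lemma sum_vM (N : ℕ) : ∑ n ∈ range (N + 1), ArithmeticFunction.vonMangoldt n = Chebyshev.psi N := by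
  rw [Chebyshev.psi_eq_sum_Icc, Nat.floor_natCast, Finset.range_eq_Ico]
  rfl

/-- The same estimate for the first Chebyshev function; prime powers contribute only `O(√N log N)`. -/
lemma lp_bound : ∃ K : ℝ, 0 < K ∧ ∀ N : ℕ, 9 ≤ N →
    |∑ n ∈ range N, (lp n - 1)| ≤ K * (N / Real.log N ^ 2) := by
  obtain ⟨K, hK0, hK⟩ := vM_bound
  refine ⟨K + 432, by positivity, fun N hN => ?_⟩
  have hN9 : (9 : ℝ) ≤ N := by exact_mod_cast hN
  have hlN : 1 ≤ Real.log N := one_le_log (by linarith)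
  have e : ∑ n ∈ range N, (lp n - 1) = ∑ n ∈ range N, (ArithmeticFunction.vonMangoldt n - 1) -
      (Chebyshev.psi ((N - 1 : ℕ) : ℝ) - Chebyshev.theta ((N - 1 : ℕ) : ℝ)) := by
    rw [← sum_vM, ← sum_lp, Nat.sub_add_cancel (by omega), ← sum_sub_distrib, ← sum_sub_distrib]
    exact sum_congr rfl fun n _ => by ring
  have h1 := Chebyshev.theta_le_psi ((N - 1 : ℕ) : ℝ)
  have hN1 : (1 : ℝ) ≤ ((N - 1 : ℕ) : ℝ) := by exact_mod_cast (by omega)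
  have hN2 : ((N - 1 : ℕ) : ℝ) ≤ N := by exact_mod_cast Nat.sub_le _ _
  have h2 := Chebyshev.psi_sub_theta_le hN1
  have h3 : 2 * √((N - 1 : ℕ) : ℝ) * Real.log ((N - 1 : ℕ) : ℝ) ≤ 432 * (N / Real.log N ^ 2) := by
    calc 2 * √((N - 1 : ℕ) : ℝ) * Real.log ((N - 1 : ℕ) : ℝ) ≤ 2 * √(N : ℝ) * Real.log N := by
          gcongr
      _ = 2 * √(N : ℝ) * (Real.log N ^ 3 / Real.log N ^ 2) := by field_simp
      _ ≤ 2 * √(N : ℝ) * (216 * √(N : ℝ) / Real.log N ^ 2) := by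
          gcongr; exact log_cube_le (by positivity) (by positivity)
      _ = 432 * (√(N : ℝ) ^ 2 / Real.log N ^ 2) := by ring
      _ = _ := by rw [Real.sq_sqrt (by positivity)]
  rw [e]
  refine (abs_sub _ _).trans ?_
  rw [abs_of_nonneg (sub_nonneg.2 h1), add_mul]
  exact add_le_add (hK N hN) (h2.trans h3)

/-! ### Sums of primes -/

/-- The sum of the primes `< N`. -/
noncomputable def primeSum (N : ℕ) : ℝ := ∑ n ∈ range N, if n.Prime then (n : ℝ) else 0

lemma div_log_mono {x y : ℝ} (hx : 3 ≤ x) (hxy : x ≤ y) : x / Real.log x ≤ y / Real.log y := by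
  have he : Real.exp 1 ≤ x := by linarith [Real.exp_one_lt_d9]
  have h := Real.log_div_self_antitoneOn (show x ∈ {x | Real.exp 1 ≤ x} from he)
    (show y ∈ {x | Real.exp 1 ≤ x} from he.trans hxy) hxy
  simp only at h
  have h1 := one_le_log hx
  have h2 := one_le_log (hx.trans hxy)
  rw [div_le_div_iff₀ (by linarith) (by linarith)] at h ⊢
  linarith

lemma linear_le {N : ℕ} (hN : 9 ≤ N) : (N : ℝ) ≤ 216 * (N ^ 2 / Real.log N ^ 3) := by
  have hN9 : (9 : ℝ) ≤ N := by exact_mod_cast hN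
  have hlN : 1 ≤ Real.log N := one_le_log (by linarith)
  have h := log_cube_le (x := N) (by positivity) (by positivity)
  have h2 : √(N : ℝ) ≤ N := by
    rw [Real.sqrt_le_left (by positivity)]; nlinarith
  rw [← mul_div_assoc, le_div_iff₀ (by positivity)]
  nlinarith

/-- Partial summation applied to `lp_bound`, with the increasing weight `n / log n`. -/
lemma primeSum_sub_sum : ∃ K : ℝ, 0 < K ∧ ∀ N : ℕ, 81 ≤ N →
    |primeSum N - ∑ n ∈ Ico 3 N, (n : ℝ) / Real.log n| ≤ K * (N ^ 2 / Real.log N ^ 3) := by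
  obtain ⟨K, hK0, hK⟩ := lp_bound
  refine ⟨864 + 16 * K, by positivity, fun N hN81 => ?_⟩
  have hN : 9 ≤ N := by omega
  obtain ⟨a, ha3, haN, ha1, ha2, hlog⟩ := split_point hN
  have hN9 : (9 : ℝ) ≤ N := by exact_mod_cast hN
  have hlN : 1 ≤ Real.log N := one_le_log (by linarith)
  have ha3' : (3 : ℝ) ≤ a := by exact_mod_cast ha3
  have haN' : (a : ℝ) ≤ N := by exact_mod_cast haN
  have hla : 1 ≤ Real.log a := one_le_log ha3'
  have e : primeSum N - ∑ n ∈ Ico 3 N, (n : ℝ) / Real.log n =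
      (primeSum a - ∑ n ∈ Ico 3 a, (n : ℝ) / Real.log n) +
      ∑ n ∈ Ico a N, (lp n - 1) * (n / Real.log n) := by
    unfold primeSum
    rw [← sum_range_add_sum_Ico _ haN, ← sum_Ico_consecutive _ ha3 haN]
    have : ∑ n ∈ Ico a N, (lp n - 1) * (n / Real.log n) =
        ∑ n ∈ Ico a N, (if n.Prime then (n : ℝ) else 0) - ∑ n ∈ Ico a N, (n : ℝ) / Real.log n := by
      rw [← sum_sub_distrib]
      refine sum_congr rfl fun n hn => ?_
      have : (3 : ℝ) ≤ n := by exact_mod_cast ha3.trans (mem_Ico.1 hn).1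
      have := one_le_log this
      unfold lp
      split_ifs
      · field_simp
      · ring
    rw [this]; ring
  have ha_sq : (a : ℝ) * a ≤ 4 * N := by
    calc (a : ℝ) * a ≤ (2 * √(N : ℝ)) * (2 * √(N : ℝ)) := by gcongr
      _ = 4 * √(N : ℝ) ^ 2 := by ring
      _ = _ := by rw [Real.sq_sqrt (by positivity)]
  have hfirst : |primeSum a - ∑ n ∈ Ico 3 a, (n : ℝ) / Real.log n| ≤ a * a := by
    have p1 : 0 ≤ primeSum a := sum_nonneg fun n _ => by split_ifs <;> positivity
    have p2 : primeSum a ≤ a * a := by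
      calc primeSum a ≤ ∑ n ∈ range a, (a : ℝ) := by
            refine sum_le_sum fun n hn => ?_
            have : (n : ℝ) ≤ a := by exact_mod_cast (mem_range.1 hn).le
            split_ifs
            · exact this
            · positivity
        _ = _ := by simp
    have p3 : 0 ≤ ∑ n ∈ Ico 3 a, (n : ℝ) / Real.log n :=
      sum_nonneg fun n _ => div_nonneg (by positivity) (Real.log_natCast_nonneg n)
    have p4 : ∑ n ∈ Ico 3 a, (n : ℝ) / Real.log n ≤ a * a := by
      calc _ ≤ ∑ n ∈ Ico 3 a, (a : ℝ) := by
            refine sum_le_sum fun n hn => ?_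
            have h1 : (n : ℝ) ≤ a := by exact_mod_cast (mem_Ico.1 hn).2.le
            have h2 : (3 : ℝ) ≤ n := by exact_mod_cast (mem_Ico.1 hn).1
            exact (div_le_self (by positivity) (one_le_log h2)).trans h1
        _ = ((a - 3 : ℕ) : ℝ) * a := by simp
        _ ≤ _ := by gcongr; omega
    rw [abs_le]; constructor <;> linarith
  have hsecond : |∑ n ∈ Ico a N, (lp n - 1) * (n / Real.log n)| ≤
      16 * K * (N ^ 2 / Real.log N ^ 3) := by
    have hF : ∀ m, a ≤ m → m ≤ N → |∑ n ∈ range m, (lp n - 1)| ≤ K * (4 * N / Real.log N ^ 2) := by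
      intro m h1 h2
      have hm : 9 ≤ m := by nlinarith
      have h2' : (m : ℝ) ≤ N := by exact_mod_cast h2
      have h1' : (a : ℝ) ≤ m := by exact_mod_cast h1
      have hlm : Real.log a ≤ Real.log m := Real.log_le_log (by linarith) h1'
      have hlm0 : 0 < Real.log m := by linarith
      refine (hK m hm).trans ?_
      refine mul_le_mul_of_nonneg_left ?_ hK0.le
      rw [div_le_div_iff₀ (by positivity) (by positivity)]
      calc (m : ℝ) * Real.log N ^ 2 ≤ N * (2 * Real.log m) ^ 2 := by
            gcongr; linarith
        _ = _ := by ring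
    refine (abel_bound haN hF ?_).trans ?_
    · intro n h1 h2
      have h1' : (3 : ℝ) ≤ n := by exact_mod_cast ha3.trans h1
      exact_mod_cast div_log_mono h1' (by linarith : (n : ℝ) ≤ n + 1)
    · have b1 := div_log_mono ha3' haN'
      rw [abs_of_pos (by positivity), abs_of_pos (by positivity)]
      calc _ ≤ 2 * (K * (4 * N / Real.log N ^ 2)) * (N / Real.log N + N / Real.log N) := by
            gcongr
        _ = _ := by field_simp; norm_num
  rw [e]
  have := linear_le hN
  calc _ ≤ _ := abs_add_le _ _
    _ ≤ (a * a : ℝ) + _ := add_le_add hfirst hsecond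
    _ ≤ 4 * N + 16 * K * (N ^ 2 / Real.log N ^ 3) := by gcongr
    _ ≤ _ := by linarith

/-- The two-term approximation `x² / (2 log x) + x² / (4 log² x)` to the integral of `x / log x`. -/
noncomputable def mainF (x : ℝ) : ℝ := x ^ 2 / (2 * Real.log x) + x ^ 2 / (4 * Real.log x ^ 2)

lemma mainF_deriv {x : ℝ} (hx : 3 ≤ x) :
    HasDerivAt mainF (x / Real.log x - x / (2 * Real.log x ^ 3)) x := by
  have hl := one_le_log hx
  have hx0 : x ≠ 0 := by linarith
  have h1 := Real.hasDerivAt_log hx0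
  have h2 : HasDerivAt (fun y : ℝ => y ^ 2) (2 * x) x := by simpa using hasDerivAt_pow 2 x
  have h4 : HasDerivAt (fun y : ℝ => Real.log y ^ 2) (2 * Real.log x * x⁻¹) x := by
    simpa using h1.fun_pow 2
  have h3 := (h2.div (h1.const_mul 2) (by positivity)).add
    (h2.div (h4.const_mul 4) (by positivity))
  refine h3.congr_deriv ?_
  field_simp
  ring

lemma mainF_step {n : ℕ} (hn : 3 ≤ n) :
    |(n : ℝ) / Real.log n - (mainF ((n + 1 : ℕ) : ℝ) - mainF n)| ≤ 1 + n / Real.log n ^ 3 := by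
  have hn' : (3 : ℝ) ≤ n := by exact_mod_cast hn
  have hl := one_le_log hn'
  obtain ⟨c, ⟨hc1, hc2⟩, hc⟩ := exists_hasDerivAt_eq_slope mainF
    (fun x => x / Real.log x - x / (2 * Real.log x ^ 3)) (show (n : ℝ) < n + 1 by linarith)
    (fun x hx => (mainF_deriv (hn'.trans hx.1)).continuousAt.continuousWithinAt)
    (fun x hx => mainF_deriv (hn'.trans hx.1.le))
  rw [add_sub_cancel_left, div_one] at hc
  push_cast
  rw [← hc]
  have hlc : Real.log n ≤ Real.log c := Real.log_le_log (by linarith) hc1.le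
  have h1 : (n : ℝ) / Real.log n ≤ c / Real.log c := div_log_mono hn' hc1.le
  have h2 : c / Real.log c ≤ n / Real.log n + 1 := by
    calc c / Real.log c ≤ (n + 1) / Real.log n := by gcongr
      _ = n / Real.log n + 1 / Real.log n := by ring
      _ ≤ _ := by gcongr; exact div_le_self (by norm_num) hl
  have h3 : 0 ≤ c / (2 * Real.log c ^ 3) := by
    have : 0 < c := by linarith
    have : 0 < Real.log c := by linarith
    positivity
  have h4 : c / (2 * Real.log c ^ 3) ≤ n / Real.log n ^ 3 := by
    calc c / (2 * Real.log c ^ 3) ≤ (2 * n) / (2 * Real.log n ^ 3) := by gcongr; linarith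
      _ = _ := by field_simp
  rw [abs_le]; constructor <;> linarith

lemma sum_sub_mainF {N : ℕ} (hN : 9 ≤ N) :
    |∑ n ∈ Ico 3 N, (n : ℝ) / Real.log n - mainF N| ≤ 2000 * (N ^ 2 / Real.log N ^ 3) := by
  obtain ⟨a, ha3, haN, ha1, ha2, hlog⟩ := split_point hN
  have hN9 : (9 : ℝ) ≤ N := by exact_mod_cast hN
  have hlN : 1 ≤ Real.log N := one_le_log (by linarith)
  have ha3' : (3 : ℝ) ≤ a := by exact_mod_cast ha3
  have hla : 1 ≤ Real.log a := one_le_log ha3'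
  have ha_sq : (a : ℝ) * a ≤ 4 * N := by
    calc (a : ℝ) * a ≤ (2 * √(N : ℝ)) * (2 * √(N : ℝ)) := by gcongr
      _ = 4 * √(N : ℝ) ^ 2 := by ring
      _ = _ := by rw [Real.sq_sqrt (by positivity)]
  have e : ∑ n ∈ Ico 3 N, (n : ℝ) / Real.log n - mainF N =
      ∑ n ∈ Ico 3 N, ((n : ℝ) / Real.log n - (mainF ((n + 1 : ℕ) : ℝ) - mainF n)) - mainF 3 := by
    rw [sum_sub_distrib, sum_Ico_sub (fun n : ℕ => mainF n) (by omega)]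
    push_cast
    ring
  have h3 : |mainF 3| ≤ 9 := by
    have : 1 ≤ Real.log 3 := one_le_log le_rfl
    rw [mainF, abs_of_pos (by positivity)]
    calc (3 : ℝ) ^ 2 / (2 * Real.log 3) + 3 ^ 2 / (4 * Real.log 3 ^ 2)
        ≤ 3 ^ 2 / (2 * 1) + 3 ^ 2 / (4 * 1 ^ 2) := by gcongr
      _ ≤ 9 := by norm_num
  have h4 : ∑ n ∈ Ico 3 a, (n : ℝ) / Real.log n ^ 3 ≤ a * a := by
    calc _ ≤ ∑ n ∈ Ico 3 a, (a : ℝ) := by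
          refine sum_le_sum fun n hn => ?_
          have h1 : (n : ℝ) ≤ a := by exact_mod_cast (mem_Ico.1 hn).2.le
          have h2 : (3 : ℝ) ≤ n := by exact_mod_cast (mem_Ico.1 hn).1
          exact (div_le_self (by positivity) (one_le_pow₀ (one_le_log h2))).trans h1
      _ = ((a - 3 : ℕ) : ℝ) * a := by simp
      _ ≤ _ := by gcongr; omega
  have h5 : ∑ n ∈ Ico a N, (n : ℝ) / Real.log n ^ 3 ≤ 8 * (N ^ 2 / Real.log N ^ 3) := by
    calc _ ≤ ∑ n ∈ Ico a N, 8 * (N : ℝ) / Real.log N ^ 3 := by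
          refine sum_le_sum fun n hn => ?_
          have h1 : (n : ℝ) ≤ N := by exact_mod_cast (mem_Ico.1 hn).2.le
          have h2 : (a : ℝ) ≤ n := by exact_mod_cast (mem_Ico.1 hn).1
          have h3 : Real.log a ≤ Real.log n := Real.log_le_log (by linarith) h2
          have h4 : 0 < Real.log n := by linarith
          rw [div_le_div_iff₀ (by positivity) (by positivity)]
          calc (n : ℝ) * Real.log N ^ 3 ≤ N * (2 * Real.log n) ^ 3 := by
                gcongr; linarith
            _ = _ := by ring
      _ = ((N - a : ℕ) : ℝ) * (8 * N / Real.log N ^ 3) := by simp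
      _ ≤ (N : ℝ) * (8 * N / Real.log N ^ 3) := by gcongr; omega
      _ = _ := by ring
  have h6 : |∑ n ∈ Ico 3 N, ((n : ℝ) / Real.log n - (mainF ((n + 1 : ℕ) : ℝ) - mainF n))| ≤
      N + (4 * N + 8 * (N ^ 2 / Real.log N ^ 3)) := by
    calc _ ≤ ∑ n ∈ Ico 3 N, (1 + (n : ℝ) / Real.log n ^ 3) :=
          (abs_sum_le_sum_abs _ _).trans (sum_le_sum fun n hn => mainF_step (mem_Ico.1 hn).1)
      _ = ((N - 3 : ℕ) : ℝ) + (∑ n ∈ Ico 3 a, (n : ℝ) / Real.log n ^ 3 +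
            ∑ n ∈ Ico a N, (n : ℝ) / Real.log n ^ 3) := by
          rw [sum_add_distrib, sum_Ico_consecutive _ ha3 haN]; simp
      _ ≤ N + (a * a + 8 * (N ^ 2 / Real.log N ^ 3)) := by
          gcongr; omega
      _ ≤ _ := by gcongr
  rw [e]
  have := linear_le hN
  refine (abs_sub _ _).trans ?_
  linarith

/-- The sum of the primes `< N` to the second order in `1 / log N`. -/
lemma primeSum_asymp : ∃ K : ℝ, 0 < K ∧ ∀ N : ℕ, 81 ≤ N →
    |primeSum N - mainF N| ≤ K * (N ^ 2 / Real.log N ^ 3) := by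
  obtain ⟨K, hK0, hK⟩ := primeSum_sub_sum
  refine ⟨K + 2000, by positivity, fun N hN => ?_⟩
  have h1 := hK N hN
  have h2 := sum_sub_mainF (N := N) (by omega)
  have := abs_sub_le (primeSum N) (∑ n ∈ Ico 3 N, (n : ℝ) / Real.log n) (mainF N)
  linarith

/-! ### Passage to the sequence of primes -/

lemma log_pow_div_tendsto (k : ℕ) : Tendsto (fun y : ℝ => Real.log y ^ k / y) atTop (𝓝 0) :=
  (Real.isLittleO_pow_log_id_atTop (n := k)).tendsto_div_nhds_zero

lemma theta_tendsto : Tendsto (fun N : ℕ => Chebyshev.theta N / N) atTop (𝓝 1) := by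
  obtain ⟨K, hK0, hK⟩ := lp_bound
  have hlog : Tendsto (fun N : ℕ => Real.log ((N + 1 : ℕ) : ℝ)) atTop atTop :=
    Real.tendsto_log_atTop.comp (tendsto_natCast_atTop_atTop.comp (tendsto_add_atTop_nat 1))
  have h0 : Tendsto (fun N : ℕ => 2 * K / Real.log ((N + 1 : ℕ) : ℝ) ^ 2 + 1 / (N : ℝ)) atTop (𝓝 0) := by
    have := (((tendsto_pow_atTop (two_ne_zero)).comp hlog).const_div_atTop (2 * K)).add
      (tendsto_const_div_atTop_nhds_zero_nat (1 : ℝ))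
    simpa using this
  rw [tendsto_iff_norm_sub_tendsto_zero]
  refine squeeze_zero' (Eventually.of_forall fun _ => norm_nonneg _) ?_ h0
  filter_upwards [eventually_ge_atTop 9] with N hN
  have hN9 : (9 : ℝ) ≤ N := by exact_mod_cast hN
  have h1 := hK (N + 1) (by omega)
  have hl : 1 ≤ Real.log ((N + 1 : ℕ) : ℝ) := one_le_log (by push_cast; linarith)
  rw [sum_sub_distrib, sum_lp] at h1
  simp only [sum_const, card_range, nsmul_eq_mul, mul_one] at h1
  have e : Chebyshev.theta N / N - 1 = (Chebyshev.theta N - ((N + 1 : ℕ) : ℝ)) / N + 1 / N := by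
    push_cast; field_simp; ring
  rw [Real.norm_eq_abs, e]
  refine (abs_add_le _ _).trans ?_
  rw [abs_of_pos (by positivity : (0 : ℝ) < 1 / N), abs_div, abs_of_pos (by positivity : (0 : ℝ) < N)]
  gcongr ?_ + _
  rw [div_le_iff₀ (by positivity)]
  refine h1.trans ?_
  have : ((N + 1 : ℕ) : ℝ) ≤ 2 * N := by push_cast; linarith
  calc _ ≤ K * (2 * N / Real.log ((N + 1 : ℕ) : ℝ) ^ 2) := by gcongr
    _ = _ := by ring

lemma primeCounting_tendsto :
    Tendsto (fun N : ℕ => (Nat.primeCounting N : ℝ) * Real.log N / N) atTop (𝓝 1) := by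
  have hcast : Tendsto (fun N : ℕ => (N : ℝ)) atTop atTop := tendsto_natCast_atTop_atTop
  have hO := Chebyshev.primeCounting_sub_theta_div_log_isBigO.comp_tendsto hcast
  obtain ⟨C, hC⟩ := hO.bound
  have hlog : Tendsto (fun N : ℕ => Real.log (N : ℝ)) atTop atTop := Real.tendsto_log_atTop.comp hcast
  have h0 : Tendsto (fun N : ℕ => (Nat.primeCounting N : ℝ) * Real.log N / N - Chebyshev.theta N / N)
      atTop (𝓝 0) := by
    refine squeeze_zero_norm' ?_ (hlog.const_div_atTop C)
    filter_upwards [hC, eventually_ge_atTop 3] with N h hN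
    have hN3 : (3 : ℝ) ≤ N := by exact_mod_cast hN
    have hl := one_le_log hN3
    simp only [Function.comp, Nat.floor_natCast] at h
    have e : (Nat.primeCounting N : ℝ) * Real.log N / N - Chebyshev.theta N / N =
      ((Nat.primeCounting N : ℝ) - Chebyshev.theta N / Real.log N) * (Real.log N / N) := by
      field_simp
    rw [e, norm_mul, Real.norm_of_nonneg (by positivity : 0 ≤ Real.log N / N)]
    rw [Real.norm_of_nonneg (by positivity : 0 ≤ (N : ℝ) / Real.log N ^ 2)] at h
    calc _ ≤ C * ((N : ℝ) / Real.log N ^ 2) * (Real.log N / N) := by gcongr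
      _ = _ := by field_simp
  simpa using h0.add theta_tendsto

lemma primeSum_tendsto :
    Tendsto (fun N : ℕ => primeSum N * Real.log N ^ 2 / N ^ 2 - Real.log N / 2) atTop (𝓝 (1 / 4)) := by
  obtain ⟨K, hK0, hK⟩ := primeSum_asymp
  have hlog : Tendsto (fun N : ℕ => Real.log (N : ℝ)) atTop atTop :=
    Real.tendsto_log_atTop.comp tendsto_natCast_atTop_atTop
  rw [tendsto_iff_norm_sub_tendsto_zero]
  refine squeeze_zero' (Eventually.of_forall fun _ => norm_nonneg _) ?_ (hlog.const_div_atTop K)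
  filter_upwards [eventually_ge_atTop 81] with N hN
  have hN3 : (81 : ℝ) ≤ N := by exact_mod_cast hN
  have hl : 1 ≤ Real.log N := one_le_log (by linarith)
  have e : primeSum N * Real.log N ^ 2 / N ^ 2 - Real.log N / 2 - 1 / 4 =
      (primeSum N - mainF N) * (Real.log N ^ 2 / N ^ 2) := by
    unfold mainF; field_simp; ring
  rw [e, norm_mul, Real.norm_of_nonneg (by positivity : 0 ≤ Real.log N ^ 2 / (N : ℝ) ^ 2)]
  calc _ ≤ K * (N ^ 2 / Real.log N ^ 3) * (Real.log N ^ 2 / (N : ℝ) ^ 2) := by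
        gcongr; exact hK N hN
    _ = _ := by field_simp

/-- Elimination of `x n` in favour of `n`. If `n log x / x → 1` then `log n` equals
`log x - log (log x) + o(1)`, which turns a second-order expansion of `T` in terms of `x` into one in
terms of `n`. -/
lemma change_variable {x T : ℕ → ℝ} (hx : Tendsto x atTop atTop)
    (h1 : Tendsto (fun n : ℕ => n * Real.log (x n) / x n) atTop (𝓝 1))
    (h2 : Tendsto (fun n : ℕ => T n * Real.log (x n) ^ 2 / x n ^ 2 - Real.log (x n) / 2)
      atTop (𝓝 (1 / 4))) :
    Tendsto (fun n : ℕ => Real.log n ^ 2 * T n / x n ^ 2 - Real.log n / 2 +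
      Real.log (Real.log n) / 2) atTop (𝓝 (1 / 4)) := by
  have hy : Tendsto (fun n => Real.log (x n)) atTop atTop := Real.tendsto_log_atTop.comp hx
  have hr : Tendsto (fun n : ℕ => Real.log (n * Real.log (x n) / x n)) atTop (𝓝 0) := by
    simpa using h1.log one_ne_zero
  have hlogr : ∀ᶠ n : ℕ in atTop, Real.log (n * Real.log (x n) / x n) =
      Real.log n + Real.log (Real.log (x n)) - Real.log (x n) := by
    filter_upwards [hx.eventually_gt_atTop 0, hy.eventually_gt_atTop 0, eventually_gt_atTop 0]
      with n a b c
    have c' : (n : ℝ) ≠ 0 := by exact_mod_cast c.ne'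
    rw [Real.log_div (by positivity) a.ne', Real.log_mul c' b.ne']
  have hinv : Tendsto (fun n => (Real.log (x n))⁻¹) atTop (𝓝 0) := tendsto_inv_atTop_zero.comp hy
  have hly : Tendsto (fun n => Real.log (Real.log (x n)) / Real.log (x n)) atTop (𝓝 0) := by
    simpa using! (log_pow_div_tendsto 1).comp hy
  have hly2 : Tendsto (fun n => Real.log (Real.log (x n)) ^ 2 / Real.log (x n)) atTop (𝓝 0) :=
    (log_pow_div_tendsto 2).comp hy
  have hq : Tendsto (fun n : ℕ => Real.log n / Real.log (x n)) atTop (𝓝 1) := by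
    have := (hr.mul hinv).sub hly |>.const_add 1
    simp only [mul_zero, sub_zero, add_zero] at this
    refine this.congr' ?_
    filter_upwards [hlogr, hy.eventually_gt_atTop 0] with n a b
    rw [a]; field_simp; ring
  have hlq : Tendsto (fun n : ℕ => Real.log (Real.log n / Real.log (x n))) atTop (𝓝 0) := by
    simpa using hq.log one_ne_zero
  -- With `y = log x`, `r = n y / x` and `q = log n / y`, the quantity to be estimated is
  -- `q² (T y² / x² - y / 2) + (q log r + log q + (log² y - log r log y) / y) / 2`.
  have hfin := ((hq.pow 2).mul h2).add
    ((((hq.mul hr).add hlq).add (hly2.sub (hr.mul hly))).div_const 2)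
  norm_num at hfin
  norm_num
  refine hfin.congr' ?_
  filter_upwards [hlogr, hy.eventually_gt_atTop 0, hx.eventually_gt_atTop 0,
    eventually_ge_atTop 3] with n a b c d
  have hL : 0 < Real.log n := lt_of_lt_of_le one_pos (one_le_log (by exact_mod_cast d))
  rw [a, Real.log_div hL.ne' b.ne']
  field_simp
  ring

lemma p_succ (n : ℕ) : p (n + 1) = Nat.nth Nat.Prime n := by simp [p]

lemma p_prime (n : ℕ) : (p n).Prime := Nat.prime_nth_prime _

lemma p_strictMono : StrictMono (fun n => p (n + 1)) := by
  simp_rw [p_succ]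
  exact Nat.nth_strictMono Nat.infinite_setOfPred_prime

/-- The primes `< p (n + 1)` are exactly the first `n` primes. -/
lemma primeSum_p (n : ℕ) : primeSum (p (n + 1)) = S n := by
  rw [p_succ]
  induction n with
  | zero => 
    simp [primeSum, S, Nat.nth_prime_zero_eq_two, sum_range_succ, Nat.not_prime_one, Nat.not_prime_zero]
  | succ n ih =>
    have e : S (n + 1) = S n + Nat.nth Nat.Prime n := by
      rw [S, sum_Icc_succ_top (by omega), p_succ]; rfl
    rw [e, Nat.cast_add, ← ih, primeSum, primeSum, ← sum_filter, ← sum_filter,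
      Nat.filter_range_nth_eq_insert_of_infinite Nat.infinite_setOfPred_prime, sum_insert (by simp)]
    ring

/-- The shift reflects that `p` is indexed from `1`. -/
lemma primeCounting_p (n : ℕ) : Nat.primeCounting (p (n + 1)) = n + 1 := by
  rw [p_succ, Nat.primeCounting_eq_primeCounting'_succ, Nat.primeCounting', Nat.count_succ,
    if_pos (Nat.prime_nth_prime n)]
  have := Nat.primeCounting'_nth_eq n
  rw [Nat.primeCounting'] at this
  rw [this]

lemma p_succ_tendsto : Tendsto (fun n => p (n + 1)) atTop atTop := p_strictMono.tendsto_atTop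

lemma p_tendsto : Tendsto p atTop atTop := (tendsto_add_atTop_iff_nat 1).1 p_succ_tendsto

lemma log_pow_div_nat (k : ℕ) : Tendsto (fun N : ℕ => Real.log N ^ k / (N : ℝ)) atTop (𝓝 0) :=
  (log_pow_div_tendsto k).comp tendsto_natCast_atTop_atTop

/-- The expansion of the theorem with both denominators replaced by `p n`. Here `S n` exceeds the sum
of the primes `< p n` by `p n`, which is negligible. -/
lemma upper_limit : Tendsto (fun n : ℕ => Real.log n ^ 2 * S n / (p n : ℝ) ^ 2 - Real.log n / 2 +
      Real.log (Real.log n) / 2) atTop (𝓝 (1 / 4)) := by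
  have hpc := primeCounting_tendsto.comp p_tendsto
  have hps := primeSum_tendsto.comp p_tendsto
  have hl := (log_pow_div_nat 2).comp p_tendsto
  refine change_variable (tendsto_natCast_atTop_atTop.comp p_tendsto) (hpc.congr' ?_) ?_
  · filter_upwards [eventually_ge_atTop 1] with n hn
    obtain ⟨m, rfl⟩ := Nat.exists_eq_add_of_le' hn
    simp only [Function.comp, primeCounting_p]
  · have := hps.add hl
    rw [add_zero] at this
    refine this.congr' ?_
    filter_upwards [eventually_ge_atTop 1] with n hn
    obtain ⟨m, rfl⟩ := Nat.exists_eq_add_of_le' hn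
    have e : (S (m + 1) : ℝ) = S m + p (m + 1) := by
      rw [S, sum_Icc_succ_top (by omega), Nat.cast_add]; rfl
    have hp : (0 : ℝ) < p (m + 1) := by exact_mod_cast (p_prime _).pos
    simp only [Function.comp, primeSum_p, e]
    field_simp
    ring

/-- The expansion of the theorem with both denominators replaced by `p (n + 1)`. -/
lemma lower_limit : Tendsto (fun n : ℕ => Real.log n ^ 2 * S n / (p (n + 1) : ℝ) ^ 2 -
      Real.log n / 2 + Real.log (Real.log n) / 2) atTop (𝓝 (1 / 4)) := by
  have hpc := primeCounting_tendsto.comp p_succ_tendsto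
  have hps := primeSum_tendsto.comp p_succ_tendsto
  have hl := (log_pow_div_nat 1).comp p_succ_tendsto
  refine change_variable (tendsto_natCast_atTop_atTop.comp p_succ_tendsto) ?_ (hps.congr ?_)
  · have := hpc.sub hl
    rw [sub_zero] at this
    refine this.congr fun n => ?_
    simp only [Function.comp, primeCounting_p]
    push_cast
    ring
  · intro n
    simp only [Function.comp, primeSum_p]

end PNT

theorem stmt1 :
    (fun n : ℕ =>
        Real.log n / ((p n : ℝ) * (p (n+1) : ℝ)) * (S n : ℝ)
          - (1/2 - Real.log (Real.log n) / (2 * Real.log n) + 1 / (4 * Real.log n)))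
      =o[atTop] (fun n : ℕ => 1 / Real.log n) := by
  have hL : ∀ᶠ n : ℕ in atTop, 0 < Real.log n := by
    filter_upwards [eventually_ge_atTop 3] with n hn
    exact lt_of_lt_of_le one_pos (PNT.one_le_log (by exact_mod_cast hn))
  rw [isLittleO_iff_tendsto' (hL.mono fun n h h' => by simp [h.ne'] at h')]
  have hmid : Tendsto (fun n : ℕ => Real.log n ^ 2 * S n / ((p n : ℝ) * (p (n + 1) : ℝ)) -
      Real.log n / 2 + Real.log (Real.log n) / 2) atTop (nhds (1 / 4)) := by
    -- `p n * p (n + 1)` lies between `p n ^ 2` and `p (n + 1) ^ 2`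
    refine tendsto_of_tendsto_of_tendsto_of_le_of_le' PNT.lower_limit PNT.upper_limit ?_ ?_ <;>
    · filter_upwards [eventually_ge_atTop 1] with n hn
      obtain ⟨m, rfl⟩ := Nat.exists_eq_add_of_le' hn
      have h0 : (0 : ℝ) < p (m + 1) := by exact_mod_cast (PNT.p_prime _).pos
      have h1 : (p (m + 1) : ℝ) ≤ p (m + 1 + 1) := by
        exact_mod_cast (PNT.p_strictMono (Nat.lt_succ_self m)).le
      have h2 : (0 : ℝ) < p (m + 1 + 1) := h0.trans_le h1
      rw [sq (p _ : ℝ)]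
      gcongr
  have := hmid.sub_const (1 / 4)
  rw [sub_self] at this
  refine this.congr' ?_
  filter_upwards [hL, eventually_ge_atTop 1] with n h hn
  have h0 : (0 : ℝ) < p n := by exact_mod_cast (PNT.p_prime _).pos
  have h1 : (0 : ℝ) < p (n + 1) := by exact_mod_cast (PNT.p_prime _).pos
  field_simp
  ring
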